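/- arXiv:math/0406360 — 3 statements merged into one kernel-verified Lean document; each statement's English description precedes it below -/
import Mathlib

section
/- Let $T_1,\dots,T_l$ be commuting invertible ergodic measure preserving transformations of a probability space $(X,\mathcal{X},\mu)$ such that $T_iT_j^{-1}$ is ergodic for all $i\neq j$. Then for all $f_1,\dots,f_l\in L^\infty(\mu)$, the averages $\frac{1}{N}\sum_{n=0}^{N-1} f_1(T_1^n x)\cdots f_l(T_l^n x)$ converge in $L^2(\mu)$ as $N\to\infty$. -/
open MeasureTheory Filter Finset

/-- The spaces `X^{[k]} = X^{2^k}`, realized as iterated squares. -/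
def HKBox (X : Type*) : ℕ → Type _
  | 0 => X
  | (k+1) => HKBox X k × HKBox X k

def HKBox.instMS (X : Type*) [m : MeasurableSpace X] : ∀ k, MeasurableSpace (HKBox X k)
  | 0 => m
  | (k+1) => @Prod.instMeasurableSpace _ _ (HKBox.instMS X k) (HKBox.instMS X k)

instance (X : Type*) [MeasurableSpace X] (k : ℕ) : MeasurableSpace (HKBox X k) :=
  HKBox.instMS X k

/-- The diagonal transformation `T^{[k]} = T × ⋯ × T` on `X^{[k]}`. -/
def HKBox.map {X : Type*} (T : X → X) : ∀ k, HKBox X k → HKBox X k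
  | 0 => T
  | (k+1) => fun p => (HKBox.map T k p.1, HKBox.map T k p.2)

/-- The σ-algebra of invariant sets of a transformation. -/
def invSigma {α : Type*} [m : MeasurableSpace α] (f : α → α) : MeasurableSpace α where
  MeasurableSet' s := MeasurableSet s ∧ f ⁻¹' s = s
  measurableSet_empty := ⟨MeasurableSet.empty, rfl⟩
  measurableSet_compl := fun s hs => ⟨hs.1.compl, by rw [Set.preimage_compl, hs.2]⟩
  measurableSet_iUnion := fun s hs => ⟨MeasurableSet.iUnion fun i => (hs i).1, by
    rw [Set.preimage_iUnion]; exact Set.iUnion_congr fun i => (hs i).2⟩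

/-- The product of `f` over all `2^k` coordinates of `X^{[k]}`. -/
def HKBox.prodFun {X : Type*} (f : X → ℝ) : ∀ k, HKBox X k → ℝ
  | 0 => f
  | (k+1) => fun p => HKBox.prodFun f k p.1 * HKBox.prodFun f k p.2

/-- `IsHKSeq μ T ν` asserts that `ν k` is the Host–Kra box measure `μ^{[k]}` of the
system `(X, μ, T)`: `ν 0 = μ` and `ν (k+1)` is the relatively independent square of
`ν k` over the σ-algebra of `T^{[k]}`-invariant sets. -/
def IsHKSeq {X : Type*} [MeasurableSpace X] (μ : Measure X) (T : X → X)
    (ν : ∀ k, Measure (HKBox X k)) : Prop :=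
  ν 0 = μ ∧ ∀ k, (∀ F' F'' : HKBox X k → ℝ, Measurable F' → Measurable F'' →
    (∃ C, ∀ x, |F' x| ≤ C) → (∃ C, ∀ x, |F'' x| ≤ C) →
    ∫ p, F' p.1 * F'' p.2 ∂(ν (k+1)) =
      ∫ x, ((ν k)[F' | invSigma (HKBox.map T k)]) x *
        ((ν k)[F'' | invSigma (HKBox.map T k)]) x ∂(ν k))

/-- The `k`-th Host–Kra seminorm of `f`, computed from a sequence `ν` of box measures:
`⦀f⦀_k = (∫ ∏_{ε} f(x_ε) dν k)^{1/2^k}`. -/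
noncomputable def HKseminorm {X : Type*} [MeasurableSpace X]
    (ν : ∀ k, Measure (HKBox X k)) (k : ℕ) (f : X → ℝ) : ℝ :=
  (∫ x, HKBox.prodFun f k x ∂(ν k)) ^ (((2 : ℝ) ^ k)⁻¹)


section MEA
universe u

/-- The seminorm of a positive functional. -/
noncomputable def nrm {A : Type*} [CommRing A] [Algebra ℝ A] (τ : A →ₗ[ℝ] ℝ) (a : A) : ℝ :=
  √(τ (a * a))

section basic
variable {A : Type*} [CommRing A] [Algebra ℝ A] {τ : A →ₗ[ℝ] ℝ}

theorem nrm_nonneg (a : A) : 0 ≤ nrm τ a := Real.sqrt_nonneg _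

theorem nrm_sq (h0 : ∀ a, 0 ≤ τ (a * a)) (a : A) : nrm τ a ^ 2 = τ (a * a) :=
  Real.sq_sqrt (h0 a)

theorem nrm_cs (h0 : ∀ a, 0 ≤ τ (a * a)) (a b : A) : |τ (a * b)| ≤ nrm τ a * nrm τ b := by
  have key : ∀ t : ℝ, 0 ≤ τ (b * b) * (t * t) + (2 * τ (a * b)) * t + τ (a * a) := by
    intro t
    have h := h0 (a + t • b)
    have e : (a + t • b) * (a + t • b) = a * a + (2 * t) • (a * b) + (t * t) • (b * b) := by
      simp only [Algebra.smul_def, map_mul, map_ofNat]; ring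
    rw [e] at h
    simp only [map_add, map_smul, smul_eq_mul] at h
    nlinarith
  have d := discrim_le_zero key
  unfold discrim at d
  unfold nrm
  rw [← Real.sqrt_mul (h0 a)]
  apply Real.abs_le_sqrt
  nlinarith

theorem nrm_add (h0 : ∀ a, 0 ≤ τ (a * a)) (a b : A) : nrm τ (a + b) ≤ nrm τ a + nrm τ b := by
  have h1 := nrm_cs h0 a b
  have e : τ ((a + b) * (a + b)) = τ (a * a) + 2 * τ (a * b) + τ (b * b) := by
    have : (a + b) * (a + b) = a * a + (a * b + a * b) + b * b := by ring
    rw [this]; simp only [map_add]; ring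
  have h2 := le_abs_self (τ (a * b))
  have ha := nrm_sq h0 a
  have hb := nrm_sq h0 b
  apply Real.sqrt_le_iff.2
  refine ⟨add_nonneg (nrm_nonneg a) (nrm_nonneg b), ?_⟩
  rw [e]; nlinarith

theorem nrm_smul (t : ℝ) (a : A) : nrm τ (t • a) = |t| * nrm τ a := by
  unfold nrm
  have : (t • a) * (t • a) = (t * t) • (a * a) := by
    simp only [Algebra.smul_def, map_mul]; ring
  rw [this, map_smul, smul_eq_mul, Real.sqrt_mul (mul_self_nonneg t), Real.sqrt_mul_self_eq_abs]

theorem nrm_neg (a : A) : nrm τ (-a) = nrm τ a := by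
  simp [nrm]

theorem nrm_zero : nrm τ (0 : A) = 0 := by
  simp [nrm]

theorem nrm_sub (h0 : ∀ a, 0 ≤ τ (a * a)) (a b : A) : nrm τ (a - b) ≤ nrm τ a + nrm τ b := by
  rw [sub_eq_add_neg, ← nrm_neg b]; exact nrm_add h0 _ _

theorem nrm_sum (h0 : ∀ a, 0 ≤ τ (a * a)) (x : ℕ → A) (s : Finset ℕ) :
    nrm τ (∑ n ∈ s, x n) ≤ ∑ n ∈ s, nrm τ (x n) := by
  classical
  induction s using Finset.induction_on with
  | empty => simp [nrm_zero]
  | insert a s ha ih =>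
    rw [Finset.sum_insert ha, Finset.sum_insert ha]
    exact (nrm_add h0 _ _).trans (by linarith)

end basic

/-- Averages. -/
noncomputable def av {V : Type*} [AddCommGroup V] [Module ℝ V] (x : ℕ → V) (N : ℕ) : V :=
  (N : ℝ)⁻¹ • ∑ n ∈ range N, x n

section avs
variable {V W : Type*} [AddCommGroup V] [Module ℝ V] [AddCommGroup W] [Module ℝ W]

theorem map_av (φ : V →ₗ[ℝ] W) (x : ℕ → V) (N : ℕ) : φ (av x N) = av (fun n => φ (x n)) N := by
  simp [av, map_smul, map_sum]

theorem av_add (x y : ℕ → V) (N : ℕ) : av (fun n => x n + y n) N = av x N + av y N := by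
  simp [av, Finset.sum_add_distrib]

theorem av_sub (x y : ℕ → V) (N : ℕ) : av (fun n => x n - y n) N = av x N - av y N := by
  simp [av, Finset.sum_sub_distrib, smul_sub]

theorem av_smul (c : ℝ) (x : ℕ → V) (N : ℕ) : av (fun n => c • x n) N = c • av x N := by
  simp only [av, ← Finset.smul_sum]; rw [smul_comm]

theorem av_mono {x y : ℕ → ℝ} (h : ∀ n, x n ≤ y n) (N : ℕ) : av x N ≤ av y N := by
  simp only [av, smul_eq_mul]
  gcongr
  exact h _

theorem av_nonneg {x : ℕ → ℝ} (h : ∀ n, 0 ≤ x n) (N : ℕ) : 0 ≤ av x N := by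
  simp only [av, smul_eq_mul]
  exact mul_nonneg (by positivity) (Finset.sum_nonneg fun i _ => h i)

theorem av_const_le {c : ℝ} (hc : 0 ≤ c) (N : ℕ) : av (fun _ => c) N ≤ c := by
  simp only [av, smul_eq_mul, Finset.sum_const, card_range, nsmul_eq_mul]
  rcases Nat.eq_zero_or_pos N with h | h
  · simp [h, hc]
  · field_simp; exact le_refl _

theorem abs_av_le (x : ℕ → ℝ) (N : ℕ) : |av x N| ≤ av (fun n => |x n|) N := by
  simp only [av, smul_eq_mul, abs_mul]
  rw [abs_of_nonneg (by positivity : (0:ℝ) ≤ (N:ℝ)⁻¹)]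
  gcongr
  exact Finset.abs_sum_le_sum_abs _ _

theorem abs_av_le_const {x : ℕ → ℝ} {c : ℝ} (h : ∀ n, |x n| ≤ c) (N : ℕ) : |av x N| ≤ c :=
  (abs_av_le x N).trans ((av_mono h N).trans (av_const_le ((abs_nonneg _).trans (h 0)) N))

theorem av_sq_le (x : ℕ → ℝ) (N : ℕ) : (av x N) ^ 2 ≤ av (fun n => x n ^ 2) N := by
  simp only [av, smul_eq_mul]
  rcases Nat.eq_zero_or_pos N with h | h
  · simp [h]
  · have := sq_sum_le_card_mul_sum_sq (s := range N) (f := x)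
    rw [card_range] at this
    rw [mul_pow]
    have hN : (0:ℝ) < N := by exact_mod_cast h
    calc ((N:ℝ)⁻¹) ^ 2 * (∑ n ∈ range N, x n) ^ 2
        ≤ ((N:ℝ)⁻¹) ^ 2 * (N * ∑ n ∈ range N, x n ^ 2) := by gcongr
      _ = _ := by field_simp

theorem av_shift {x : ℕ → ℝ} {c : ℝ} (h : ∀ n, |x n| ≤ c) (l N : ℕ) :
    |av x N - av (fun n => x (n + l)) N| ≤ 2 * l * c * (N : ℝ)⁻¹ := by
  have hc : 0 ≤ c := (abs_nonneg _).trans (h 0)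
  have e : ∑ n ∈ range N, x n - ∑ n ∈ range N, x (n + l) =
      ∑ n ∈ range l, x n - ∑ n ∈ range l, x (n + N) := by
    have h1 := Finset.sum_range_add x N l
    have h2 := Finset.sum_range_add x l N
    have h3 : ∑ n ∈ range N, x (n + l) = ∑ n ∈ range N, x (l + n) := by simp [add_comm]
    have h4 : ∑ n ∈ range l, x (n + N) = ∑ n ∈ range l, x (N + n) := by simp [add_comm]
    rw [h3, h4]
    rw [add_comm l N] at h2
    linarith
  have b : ∀ y : ℕ → ℝ, (∀ n, |y n| ≤ c) → |∑ n ∈ range l, y n| ≤ l * c := by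
    intro y hy
    refine (Finset.abs_sum_le_sum_abs _ _).trans ((Finset.sum_le_sum fun i _ => hy i).trans ?_)
    simp
  simp only [av, smul_eq_mul, ← mul_sub, e, abs_mul]
  rw [abs_of_nonneg (by positivity : (0:ℝ) ≤ (N:ℝ)⁻¹), mul_comm]
  gcongr
  refine (abs_sub _ _).trans ?_
  have := b x h
  have := b (fun n => x (n + N)) (fun n => h _)
  linarith

theorem nrm_av_le {A : Type*} [CommRing A] [Algebra ℝ A] {τ : A →ₗ[ℝ] ℝ}
    (h0 : ∀ a, 0 ≤ τ (a * a)) (x : ℕ → A) (N : ℕ) :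
    nrm τ (av x N) ≤ av (fun n => nrm τ (x n)) N := by
  simp only [av, nrm_smul, smul_eq_mul]
  rw [abs_of_nonneg (by positivity : (0:ℝ) ≤ (N:ℝ)⁻¹)]
  gcongr
  exact nrm_sum h0 _ _

theorem nrm_av_le_const {A : Type*} [CommRing A] [Algebra ℝ A] {τ : A →ₗ[ℝ] ℝ}
    (h0 : ∀ a, 0 ≤ τ (a * a)) {x : ℕ → A} {c : ℝ} (h : ∀ n, nrm τ (x n) ≤ c) (N : ℕ) :
    nrm τ (av x N) ≤ c :=
  (nrm_av_le h0 x N).trans ((av_mono h N).trans (av_const_le ((nrm_nonneg _).trans (h 0)) N))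

end avs

/-- Ultralimit of bounded linear functionals. -/
theorem exists_ulim {V : Type*} [AddCommGroup V] [Module ℝ V] (U : Ultrafilter ℕ)
    (ψ : ℕ → V →ₗ[ℝ] ℝ) (hψ : ∀ v, ∃ C, ∀ N, |ψ N v| ≤ C) :
    ∃ φ : V →ₗ[ℝ] ℝ, ∀ v, Tendsto (fun N => ψ N v) U (nhds (φ v)) := by
  have h : ∀ v, ∃ l, Tendsto (fun N => ψ N v) U (nhds l) := by
    intro v
    obtain ⟨C, hC⟩ := hψ v
    have hK : IsCompact (Set.Icc (-C) C) := isCompact_Icc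
    obtain ⟨l, -, hl⟩ := hK.ultrafilter_le_nhds (U.map fun N => ψ N v) (by
      rw [le_principal_iff]
      exact Ultrafilter.mem_map.2 (Filter.univ_mem' fun N => abs_le.1 (hC N)))
    exact ⟨l, hl⟩
  choose l hl using h
  refine ⟨{ toFun := l, map_add' := ?_, map_smul' := ?_ }, hl⟩
  · intro v w
    refine tendsto_nhds_unique (hl (v + w)) ?_
    simpa using (hl v).add (hl w)
  · intro c v
    refine tendsto_nhds_unique (hl (c • v)) ?_
    simpa using (hl v).const_mul c

/-- Hilbert space lemma. -/
theorem hilbert_aux {E : Type*} [SeminormedAddCommGroup E] [InnerProductSpace ℝ E]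
    (Φ : Set (E →ₗ[ℝ] ℝ)) (C : ℝ) (hΦ : ∀ φ ∈ Φ, ∀ b, |φ b| ≤ C * ‖b‖) (g : E)
    {δ : ℝ} (hδ : 0 < δ) :
    ∃ s : E, ∃ φ ∈ Submodule.span ℝ Φ, (∀ b, |φ b - inner ℝ s b| ≤ δ * ‖b‖) ∧
      ∀ ψ ∈ Φ, |ψ (g - s)| ≤ δ := by
  classical
  let H := UniformSpace.Completion E
  -- vectors in `H` representing elements of the span
  have hrep : ∀ φ ∈ Φ, ∃ z : H, ∀ b : E, inner ℝ z (b : H) = φ b := by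
    intro φ hφ
    let φ' : E →L[ℝ] ℝ := φ.mkContinuous C (fun b => hΦ φ hφ b)
    let φe : H →L[ℝ] ℝ := φ'.extend (UniformSpace.Completion.toComplL (𝕜 := ℝ) (E := E))
    refine ⟨(InnerProductSpace.toDual ℝ H).symm φe, fun b => ?_⟩
    rw [InnerProductSpace.toDual_symm_apply]
    exact ContinuousLinearMap.extend_eq _ UniformSpace.Completion.denseRange_coe
      (UniformSpace.Completion.isUniformInducing_coe E) b
  let Z : Submodule ℝ H :=
    { carrier := {z | ∃ φ ∈ Submodule.span ℝ Φ, ∀ b : E, inner ℝ z (b : H) = φ b}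
      add_mem' := by
        rintro x y ⟨φ, h1, h2⟩ ⟨ψ, h3, h4⟩
        exact ⟨φ + ψ, add_mem h1 h3, fun b => by rw [inner_add_left, h2, h4]; rfl⟩
      zero_mem' := ⟨0, zero_mem _, fun b => inner_zero_left _⟩
      smul_mem' := by
        rintro c x ⟨φ, h1, h2⟩
        exact ⟨c • φ, Submodule.smul_mem _ c h1, fun b => by
          rw [inner_smul_left, h2]; rfl⟩ }
  let K := Z.topologicalClosure
  have : CompleteSpace K := Z.isClosed_topologicalClosure.completeSpace_coe
  let σ : H := K.starProjection (g : H)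
  have hσ : σ ∈ K := Submodule.starProjection_apply_mem K _
  have hu : ∀ z ∈ K, inner ℝ z ((g : H) - σ) = 0 := fun z hz =>
    (Submodule.mem_orthogonal _ _).1 (Submodule.sub_starProjection_mem_orthogonal (K := K) (g : H)) z hz
  let η := δ / (2 * (|C| + 1))
  have hη : 0 < η := by positivity
  have hη1 : η ≤ δ / 2 := by
    apply div_le_div_of_nonneg_left hδ.le (by norm_num)
    linarith [abs_nonneg C]
  have hηC : |C| * η ≤ δ / 2 := by
    have : η * (|C| + 1) = δ / 2 := by simp only [η]; field_simp
    nlinarith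
  obtain ⟨z, ⟨φ, hφ, hz⟩, hzσ⟩ := Metric.mem_closure_iff.1 hσ η hη
  obtain ⟨s, hs⟩ := UniformSpace.Completion.denseRange_coe (α := E) |>.exists_dist_lt σ hη
  refine ⟨s, φ, hφ, ?_, ?_⟩
  · intro b
    have : φ b - inner ℝ s b = inner ℝ (z - (s : H)) (b : H) := by
      rw [inner_sub_left, hz, UniformSpace.Completion.inner_coe]
    rw [this]
    refine (abs_real_inner_le_norm _ _).trans ?_
    rw [UniformSpace.Completion.norm_coe]
    gcongr
    rw [← dist_eq_norm]
    calc dist z (s : H) ≤ dist z σ + dist σ (s : H) := dist_triangle _ _ _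
      _ ≤ δ := by rw [dist_comm z σ]; linarith
  · intro ψ hψ
    obtain ⟨w, hw⟩ := hrep ψ hψ
    have hwn : ‖w‖ ≤ |C| := by
      have hall : ∀ v : H, |inner ℝ w v| ≤ |C| * ‖v‖ := by
        intro v
        refine UniformSpace.Completion.denseRange_coe.induction_on
          (p := fun v : H => |inner ℝ w v| ≤ |C| * ‖v‖) v ?_ ?_
        · exact isClosed_le (by fun_prop) (by fun_prop)
        · intro b
          rw [hw, UniformSpace.Completion.norm_coe]
          refine (hΦ ψ hψ b).trans ?_
          gcongr
          exact le_abs_self C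
      have h1 := (le_abs_self _).trans (hall w)
      rw [real_inner_self_eq_norm_sq] at h1
      by_contra hcon
      push Not at hcon
      nlinarith [abs_nonneg C]
    have hwK : w ∈ K := Z.le_topologicalClosure ⟨ψ, Submodule.subset_span hψ, hw⟩
    rw [← hw, UniformSpace.Completion.coe_sub]
    have : (g : H) - (s : H) = ((g : H) - σ) + (σ - s) := by abel
    rw [this, inner_add_right, hu w hwK, zero_add]
    refine (abs_real_inner_le_norm _ _).trans ?_
    rw [← dist_eq_norm]
    calc ‖w‖ * dist σ (s : H) ≤ |C| * η := by gcongr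
      _ ≤ δ := by linarith

theorem hilbert_alg {A : Type*} [CommRing A] [Algebra ℝ A] (τ : A →ₗ[ℝ] ℝ)
    (h0 : ∀ a, 0 ≤ τ (a * a))
    (Φ : Set (A →ₗ[ℝ] ℝ)) (C : ℝ) (hΦ : ∀ φ ∈ Φ, ∀ b, |φ b| ≤ C * nrm τ b) (g : A)
    {δ : ℝ} (hδ : 0 < δ) :
    ∃ s : A, ∃ φ ∈ Submodule.span ℝ Φ, (∀ b, |φ b - τ (s * b)| ≤ δ * nrm τ b) ∧
      ∀ ψ ∈ Φ, |ψ (g - s)| ≤ δ := by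
  let core : PreInnerProductSpace.Core ℝ A :=
    { inner := fun a b => τ (a * b)
      conj_inner_symm := fun a b => by simp [mul_comm]
      re_inner_nonneg := fun a => by simpa using h0 a
      add_left := fun a b c => by simp [add_mul]
      smul_left := fun a b r => by simp }
  let S : SeminormedAddCommGroup A := @InnerProductSpace.Core.toSeminormedAddCommGroup ℝ A _ _ _ core
  let I : InnerProductSpace ℝ A := InnerProductSpace.ofCore core
  exact hilbert_aux Φ C hΦ g hδ

/-- The algebra of uniformly bounded sequences. -/
noncomputable def seqAlg {A : Type u} [CommRing A] [Algebra ℝ A] (τ : A →ₗ[ℝ] ℝ)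
    (h0 : ∀ a, 0 ≤ τ (a * a)) : Subalgebra ℝ (ℕ → A) where
  carrier := {F | ∃ C : ℝ, 0 ≤ C ∧ ∀ m a, nrm τ (F m * a) ≤ C * nrm τ a}
  mul_mem' := by
    rintro F G ⟨C, hC, h1⟩ ⟨D, hD, h2⟩
    refine ⟨C * D, mul_nonneg hC hD, fun m a => ?_⟩
    rw [Pi.mul_apply, mul_assoc, mul_assoc]
    exact (h1 m _).trans (mul_le_mul_of_nonneg_left (h2 m a) hC)
  add_mem' := by
    rintro F G ⟨C, hC, h1⟩ ⟨D, hD, h2⟩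
    refine ⟨C + D, add_nonneg hC hD, fun m a => ?_⟩
    rw [Pi.add_apply, add_mul, add_mul]
    exact (nrm_add h0 _ _).trans (add_le_add (h1 m a) (h2 m a))
  algebraMap_mem' := by
    intro r
    refine ⟨|r|, abs_nonneg r, fun m a => ?_⟩
    rw [Pi.algebraMap_apply, ← Algebra.smul_def, nrm_smul]

theorem nrm_equiv {A : Type u} [CommRing A] [Algebra ℝ A] {τ : A →ₗ[ℝ] ℝ}
    {T : A ≃ₐ[ℝ] A} (hT : ∀ a, τ (T a) = τ a) (a : A) : nrm τ (T a) = nrm τ a := by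
  unfold nrm; rw [← map_mul, hT]

theorem inv_equiv {A : Type u} [CommRing A] [Algebra ℝ A] {τ : A →ₗ[ℝ] ℝ}
    {T : A ≃ₐ[ℝ] A} (hT : ∀ a, τ (T a) = τ a) (a : A) : τ (T.symm a) = τ a := by
  rw [← hT, AlgEquiv.apply_symm_apply]

theorem pow_equiv {A : Type u} [CommRing A] [Algebra ℝ A] {τ : A →ₗ[ℝ] ℝ}
    {T : A ≃ₐ[ℝ] A} (hT : ∀ a, τ (T a) = τ a) (n : ℕ) (a : A) : τ ((T ^ n) a) = τ a := by
  induction n generalizing a with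
  | zero => simp
  | succ n ih => rw [pow_succ', AlgEquiv.mul_apply, hT, ih]

theorem nrm_mul_equiv {A : Type u} [CommRing A] [Algebra ℝ A] {τ : A →ₗ[ℝ] ℝ}
    {T : A ≃ₐ[ℝ] A} (hT : ∀ a, τ (T a) = τ a) {x : A} {C : ℝ}
    (h : ∀ a, nrm τ (x * a) ≤ C * nrm τ a) (a : A) : nrm τ (T x * a) ≤ C * nrm τ a := by
  have : T x * a = T (x * T.symm a) := by simp
  rw [this, nrm_equiv hT]
  refine (h _).trans_eq ?_
  rw [nrm_equiv (T := T.symm) (inv_equiv hT)]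

/-- Coordinatewise action on sequences. -/
noncomputable def seqHom {A : Type u} [CommRing A] [Algebra ℝ A] {τ : A →ₗ[ℝ] ℝ}
    (h0 : ∀ a, 0 ≤ τ (a * a)) (T : A ≃ₐ[ℝ] A) (hT : ∀ a, τ (T a) = τ a) :
    seqAlg τ h0 →ₐ[ℝ] seqAlg τ h0 where
  toFun F := ⟨fun m => T (F.1 m), by
    obtain ⟨C, hC, h⟩ := F.2
    exact ⟨C, hC, fun m a => nrm_mul_equiv hT (h m) a⟩⟩
  map_one' := by ext m; simp
  map_mul' F G := by ext m; simp
  map_zero' := by ext m; simp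
  map_add' F G := by ext m; simp
  commutes' r := by ext m; exact T.commutes r

/-- Coordinatewise action on sequences. -/
noncomputable def seqEquiv {A : Type u} [CommRing A] [Algebra ℝ A] {τ : A →ₗ[ℝ] ℝ}
    (h0 : ∀ a, 0 ≤ τ (a * a)) (T : A ≃ₐ[ℝ] A) (hT : ∀ a, τ (T a) = τ a) :
    seqAlg τ h0 ≃ₐ[ℝ] seqAlg τ h0 :=
  AlgEquiv.ofAlgHom (seqHom h0 T hT) (seqHom h0 T.symm (inv_equiv hT))
    (by ext F m; simp [seqHom]) (by ext F m; simp [seqHom])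

theorem seqEquiv_apply {A : Type u} [CommRing A] [Algebra ℝ A] {τ : A →ₗ[ℝ] ℝ}
    (h0 : ∀ a, 0 ≤ τ (a * a)) (T : A ≃ₐ[ℝ] A) (hT : ∀ a, τ (T a) = τ a) (F : seqAlg τ h0)
    (m : ℕ) : (seqEquiv h0 T hT F).1 m = T (F.1 m) := rfl

theorem seqEquiv_pow {A : Type u} [CommRing A] [Algebra ℝ A] {τ : A →ₗ[ℝ] ℝ}
    (h0 : ∀ a, 0 ≤ τ (a * a)) (T : A ≃ₐ[ℝ] A) (hT : ∀ a, τ (T a) = τ a) (n : ℕ)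
    (F : seqAlg τ h0) (m : ℕ) : ((seqEquiv h0 T hT ^ n) F).1 m = (T ^ n) (F.1 m) := by
  induction n generalizing F with
  | zero => simp
  | succ n ih => rw [pow_succ', AlgEquiv.mul_apply, seqEquiv_apply, ih, pow_succ',
      AlgEquiv.mul_apply]

/-- Existence of the limiting state on sequences. -/
theorem exists_seqState {A : Type u} [CommRing A] [Algebra ℝ A] {τ : A →ₗ[ℝ] ℝ}
    (h0 : ∀ a, 0 ≤ τ (a * a)) (U : Ultrafilter ℕ) :
    ∃ τ' : seqAlg τ h0 →ₗ[ℝ] ℝ, ∀ F, Tendsto (fun N => av (fun m => τ (F.1 m)) N) U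
      (nhds (τ' F)) := by
  let ψ : ℕ → seqAlg τ h0 →ₗ[ℝ] ℝ := fun N =>
    { toFun := fun F => av (fun m => τ (F.1 m)) N
      map_add' := fun F G => by
        rw [← av_add]; congr 1; ext m; simp
      map_smul' := fun c F => by
        rw [RingHom.id_apply, ← av_smul]; congr 1; ext m; simp }
  refine exists_ulim U ψ ?_
  intro F
  obtain ⟨C, hC, h⟩ := F.2
  refine ⟨C * nrm τ 1 * nrm τ 1, fun N => abs_av_le_const (fun m => ?_) N⟩
  have h1 := nrm_cs h0 (F.1 m) 1
  rw [mul_one] at h1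
  refine h1.trans ?_
  gcongr
  · exact nrm_nonneg _
  · simpa using h m 1

/-- The induction predicate. -/
def ConvAll (k : ℕ) : Prop :=
  ∀ (A : Type u) [CommRing A] [Algebra ℝ A] (τ : A →ₗ[ℝ] ℝ) (_ : ∀ a, 0 ≤ τ (a * a))
    (_ : ∀ f : A, ∃ C : ℝ, 0 ≤ C ∧ ∀ a, nrm τ (f * a) ≤ C * nrm τ a)
    (T : Fin k → A ≃ₐ[ℝ] A) (_ : ∀ i a, τ (T i a) = τ a) (_ : ∀ i j, Commute (T i) (T j))
    (f : Fin k → A) (ε : ℝ) (_ : 0 < ε), ∃ N0 : ℕ, ∀ N ≥ N0, ∀ N' ≥ N0,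
      nrm τ (av (fun n => ∏ i, (T i ^ n) (f i)) N - av (fun n => ∏ i, (T i ^ n) (f i)) N') ≤ ε

theorem convAll_zero : ConvAll.{u} 0 := by
  intro A _ _ τ h0 hb T hT hc f ε hε
  refine ⟨1, fun N hN N' hN' => ?_⟩
  have : ∀ N ≥ 1, av (fun n => ∏ i, (T i ^ n) (f i)) N = 1 := by
    intro N hN
    have : (N : ℝ) ≠ 0 := by positivity
    simp only [av, Finset.univ_eq_empty, Finset.prod_empty, Finset.sum_const, card_range]
    rw [← Nat.cast_smul_eq_nsmul ℝ, smul_smul, inv_mul_cancel₀ this, one_smul]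
  rw [this N hN, this N' hN', sub_self, nrm_zero]
  exact hε.le

/-- The average in the sequence algebra is Cauchy. -/
theorem seq_cauchy {k : ℕ} (ih : ConvAll.{u} k) {A : Type u} [CommRing A] [Algebra ℝ A]
    {τ : A →ₗ[ℝ] ℝ} (h0 : ∀ a, 0 ≤ τ (a * a)) (U : Ultrafilter ℕ)
    (T : Fin k → A ≃ₐ[ℝ] A) (hT : ∀ i a, τ (T i a) = τ a) (hc : ∀ i j, Commute (T i) (T j))
    (F : Fin k → seqAlg τ h0) (ε : ℝ) (hε : 0 < ε) :
    ∃ N0 : ℕ, ∀ L ≥ N0, ∀ L' ≥ N0, ∀ᶠ N in (U : Filter ℕ),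
      av (fun m => nrm τ (av (fun n => ∏ i, (T i ^ n) ((F i).1 m)) L -
        av (fun n => ∏ i, (T i ^ n) ((F i).1 m)) L')) N ≤ ε := by
  obtain ⟨τ', hτ'⟩ := exists_seqState h0 U
  have h0' : ∀ a, 0 ≤ τ' (a * a) := fun a =>
    ge_of_tendsto' (hτ' (a * a)) fun N => av_nonneg (fun m => h0 _) N
  have hb' : ∀ f : seqAlg τ h0, ∃ C : ℝ, 0 ≤ C ∧ ∀ a, nrm τ' (f * a) ≤ C * nrm τ' a := by
    intro f
    obtain ⟨C, hC, h⟩ := f.2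
    refine ⟨C, hC, fun a => ?_⟩
    have h1 : τ' (f * a * (f * a)) ≤ C ^ 2 * τ' (a * a) := by
      refine le_of_tendsto_of_tendsto' (hτ' _) ((hτ' (a * a)).const_mul (C ^ 2)) fun N => ?_
      rw [← smul_eq_mul (C ^ 2), ← av_smul]
      refine av_mono (fun m => ?_) N
      have h2 := h m (a.1 m)
      have h3 := nrm_sq h0 (f.1 m * a.1 m)
      have h4 := nrm_sq h0 (a.1 m)
      have h5 := nrm_nonneg (τ := τ) (f.1 m * a.1 m)
      have h6 : τ (f.1 m * a.1 m * (f.1 m * a.1 m)) ≤ C ^ 2 * τ (a.1 m * a.1 m) := by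
        rw [← h3, ← h4, ← mul_pow]
        exact pow_le_pow_left₀ h5 h2 2
      exact h6
    apply Real.sqrt_le_iff.2
    refine ⟨mul_nonneg hC (nrm_nonneg _), ?_⟩
    rw [mul_pow, nrm_sq h0']
    exact h1
  have hT' : ∀ i a, τ' (seqEquiv h0 (T i) (hT i) a) = τ' a := by
    intro i a
    refine tendsto_nhds_unique (hτ' _) ?_
    simpa only [seqEquiv_apply, hT] using hτ' a
  have hc' : ∀ i j, Commute (seqEquiv h0 (T i) (hT i)) (seqEquiv h0 (T j) (hT j)) := by
    intro i j
    ext F m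
    have := DFunLike.congr_fun (hc i j) (F.1 m)
    exact this
  obtain ⟨N0, hN0⟩ := ih (seqAlg τ h0) τ' h0' hb' (fun i => seqEquiv h0 (T i) (hT i)) hT' hc' F
    (ε / 2) (by positivity)
  refine ⟨N0, fun L hL L' hL' => ?_⟩
  have h1 := hN0 L hL L' hL'
  set D := av (fun n => ∏ i, (seqEquiv h0 (T i) (hT i) ^ n) (F i)) L -
    av (fun n => ∏ i, (seqEquiv h0 (T i) (hT i) ^ n) (F i)) L' with hD
  have hav : ∀ (L m : ℕ), (av (fun n => ∏ i, (seqEquiv h0 (T i) (hT i) ^ n) (F i)) L).1 m =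
      av (fun n => ∏ i, (T i ^ n) ((F i).1 m)) L := by
    intro L m
    let ev : seqAlg τ h0 →ₐ[ℝ] A := (Pi.evalAlgHom ℝ (fun _ : ℕ => A) m).comp (seqAlg τ h0).val
    have h2 := map_av ev.toLinearMap (fun n => ∏ i, (seqEquiv h0 (T i) (hT i) ^ n) (F i)) L
    refine h2.trans ?_
    congr 1
    ext n
    rw [AlgHom.toLinearMap_apply, map_prod]
    exact Finset.prod_congr rfl fun i _ => seqEquiv_pow h0 (T i) (hT i) n (F i) m
  have hDm : ∀ m, D.1 m = av (fun n => ∏ i, (T i ^ n) ((F i).1 m)) L -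
        av (fun n => ∏ i, (T i ^ n) ((F i).1 m)) L' := by
    intro m
    rw [← hav, ← hav]; rfl
  simp only [← hDm]
  have h3 : τ' (D * D) < ε ^ 2 := by
    rw [← nrm_sq h0']
    have := nrm_nonneg (τ := τ') D
    nlinarith
  filter_upwards [(hτ' (D * D)).eventually (gt_mem_nhds h3)] with N hN
  have h4 := av_sq_le (fun m => nrm τ (D.1 m)) N
  simp only [nrm_sq h0] at h4
  have h5 : (av (fun m => nrm τ (D.1 m)) N) ^ 2 ≤ ε ^ 2 := h4.trans hN.le
  exact le_of_sq_le_sq h5 hε.le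

theorem av_comm {V : Type*} [AddCommGroup V] [Module ℝ V] (x : ℕ → ℕ → V) (L N : ℕ) :
    av (fun l => av (fun m => x l m) N) L = av (fun m => av (fun l => x l m) L) N := by
  simp only [av, ← Finset.smul_sum]
  rw [smul_comm, Finset.sum_comm]

theorem orbit_mem {A : Type u} [CommRing A] [Algebra ℝ A] {τ : A →ₗ[ℝ] ℝ}
    (h0 : ∀ a, 0 ≤ τ (a * a))
    (hb : ∀ f : A, ∃ C : ℝ, 0 ≤ C ∧ ∀ a, nrm τ (f * a) ≤ C * nrm τ a)
    (T : A ≃ₐ[ℝ] A) (hT : ∀ a, τ (T a) = τ a) (f : A) :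
    (fun n => (T ^ n) f) ∈ seqAlg τ h0 := by
  obtain ⟨C, hC, h⟩ := hb f
  exact ⟨C, hC, fun m a => nrm_mul_equiv (pow_equiv hT m) h a⟩

theorem prod_bound {k : ℕ} {A : Type u} [CommRing A] [Algebra ℝ A] {τ : A →ₗ[ℝ] ℝ}
    (h0 : ∀ a, 0 ≤ τ (a * a))
    (hb : ∀ f : A, ∃ C : ℝ, 0 ≤ C ∧ ∀ a, nrm τ (f * a) ≤ C * nrm τ a)
    (T : Fin k → A ≃ₐ[ℝ] A) (hT : ∀ i a, τ (T i a) = τ a) (f : Fin k → A) :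
    ∃ C : ℝ, 0 ≤ C ∧ ∀ n a, nrm τ ((∏ i, (T i ^ n) (f i)) * a) ≤ C * nrm τ a := by
  have h : (∏ i, fun n => (T i ^ n) (f i)) ∈ seqAlg τ h0 :=
    prod_mem fun i _ => orbit_mem h0 hb (T i) (hT i) (f i)
  obtain ⟨C, hC, h⟩ := h
  refine ⟨C, hC, fun n a => ?_⟩
  have := h n a
  rwa [Finset.prod_apply] at this

theorem dual_small {k : ℕ} (ih : ConvAll.{u} k) {A : Type u} [CommRing A] [Algebra ℝ A]
    {τ : A →ₗ[ℝ] ℝ} (h0 : ∀ a, 0 ≤ τ (a * a))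
    (hb : ∀ f : A, ∃ C : ℝ, 0 ≤ C ∧ ∀ a, nrm τ (f * a) ≤ C * nrm τ a)
    (T : Fin k → A ≃ₐ[ℝ] A) (hT : ∀ i a, τ (T i a) = τ a) (hc : ∀ i j, Commute (T i) (T j))
    (S : A ≃ₐ[ℝ] A) (hS : ∀ a, τ (S a) = τ a) (hcS : ∀ i, Commute S (T i))
    (f : Fin k → A) (P : ℕ → A) (hPdef : ∀ n, P n = ∏ i, (T i ^ n) (f i))
    (C : ℝ) (hP : ∀ n a, nrm τ (P n * a) ≤ C * nrm τ a)
    (U : Ultrafilter ℕ) (hU : (U : Filter ℕ) ≤ atTop) (h : ℕ → A) (hh : ∀ N, nrm τ (h N) ≤ 1)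
    (φ : A →ₗ[ℝ] ℝ)
    (hφ : ∀ b, Tendsto (fun N => av (fun n => τ (h N * (P n * (S ^ n) b))) N) U (nhds (φ b)))
    (K : ℝ) (hK : 0 ≤ K) (ε : ℝ) (hε : 0 < ε) :
    ∃ L0 : ℕ, ∀ L ≥ L0, ∀ L' ≥ L0, ∀ a, (∀ x, nrm τ (a * x) ≤ K * nrm τ x) →
      |φ (av (fun l => (S ^ l).symm (P l * a)) L - av (fun l => (S ^ l).symm (P l * a)) L')|
        ≤ ε := by
  let F : Fin k → seqAlg τ h0 := fun i =>
    ⟨fun m => (T i ^ m) (f i), orbit_mem h0 hb (T i) (hT i) (f i)⟩ *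
    ⟨fun m => (S ^ m) (f i), orbit_mem h0 hb S hS (f i)⟩
  have hF : ∀ i m, (F i).1 m = (T i ^ m) (f i) * (S ^ m) (f i) := fun i m => rfl
  obtain ⟨L0, hL0⟩ := seq_cauchy ih h0 U T hT hc F (ε / (K + 1)) (by positivity)
  refine ⟨L0, fun L hL L' hL' a ha => ?_⟩
  have key := hL0 L hL L' hL'
  set y : ℕ → ℕ → A := fun L m => av (fun n => ∏ i, (T i ^ n) ((F i).1 m)) L with hy
  -- product identity
  have hprod : ∀ m l, P (m + l) * (S ^ m) (P l) = ∏ i, (T i ^ l) ((F i).1 m) := by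
    intro m l
    rw [hPdef, hPdef, map_prod, ← Finset.prod_mul_distrib]
    refine Finset.prod_congr rfl fun i _ => ?_
    rw [hF, map_mul, add_comm m l, pow_add, AlgEquiv.mul_apply]
    congr 1
    have := ((hcS i).pow_pow m l)
    exact DFunLike.congr_fun this (f i)
  have hcs : ∀ N n b, |τ (h N * (P n * (S ^ n) b))| ≤ C * nrm τ b := by
    intro N n b
    refine (nrm_cs h0 _ _).trans ?_
    have h1 := hP n ((S ^ n) b)
    rw [nrm_equiv (pow_equiv hS n)] at h1
    have h2 := nrm_nonneg (τ := τ) (P n * (S ^ n) b)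
    nlinarith [hh N]
  have hshift : ∀ l b, Tendsto (fun N => av (fun m => τ (h N * (P (m + l) * (S ^ m) b))) N) U
      (nhds (φ ((S ^ l).symm b))) := by
    intro l b
    set b' := (S ^ l).symm b with hb'
    have e : ∀ m, (S ^ m) b = (S ^ (m + l)) b' := by
      intro m
      rw [pow_add, AlgEquiv.mul_apply, hb', AlgEquiv.apply_symm_apply]
    simp only [e]
    have hd : Tendsto (fun N => av (fun n => τ (h N * (P n * (S ^ n) b'))) N -
        av (fun m => τ (h N * (P (m + l) * (S ^ (m + l)) b'))) N) U (nhds 0) := by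
      refine squeeze_zero_norm (fun N => av_shift (x := fun n => τ (h N * (P n * (S ^ n) b')))
        (fun n => hcs N n b') l N) ?_
      have : Tendsto (fun N : ℕ => (N : ℝ)⁻¹) U (nhds 0) :=
        (tendsto_inv_atTop_nhds_zero_nat (𝕜 := ℝ)).mono_left hU
      simpa using this.const_mul (2 * (l : ℝ) * (C * nrm τ b'))
    simpa using (hφ b').sub hd
  have tend : ∀ L, Tendsto (fun N => av (fun m => τ (h N * ((S ^ m) a * y L m))) N) U
      (nhds (φ (av (fun l => (S ^ l).symm (P l * a)) L))) := by
    intro L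
    rw [map_av]
    have h1 : Tendsto (fun N => av (fun l => av (fun m =>
        τ (h N * (P (m + l) * (S ^ m) (P l * a)))) N) L) U
        (nhds (av (fun l => φ ((S ^ l).symm (P l * a))) L)) := by
      simp only [av, smul_eq_mul]
      refine Tendsto.const_mul _ (tendsto_finsetSum _ fun l _ => ?_)
      have := hshift l (P l * a)
      simpa only [av, smul_eq_mul] using this
    refine h1.congr fun N => ?_
    rw [av_comm]
    congr 1
    ext m
    have e : (fun l => τ (h N * (P (m + l) * (S ^ m) (P l * a)))) =
        fun l => (τ ∘ₗ LinearMap.mulLeft ℝ (h N * (S ^ m) a)) (∏ i, (T i ^ l) ((F i).1 m)) := by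
      ext l
      rw [← hprod, map_mul (S ^ m)]
      simp only [LinearMap.comp_apply, LinearMap.mulLeft_apply]
      congr 1; ring
    rw [e, ← map_av]
    simp only [LinearMap.comp_apply, LinearMap.mulLeft_apply]
    rw [mul_assoc]
  have t2 := ((tend L).sub (tend L')).abs
  rw [← map_sub] at t2
  refine le_of_tendsto t2 ?_
  filter_upwards [key] with N hN
  rw [← av_sub]
  refine (abs_av_le _ _).trans ?_
  calc _ ≤ av (fun m => K • nrm τ (y L m - y L' m)) N := by
        refine av_mono (fun m => ?_) N
        rw [← map_sub, ← mul_sub, ← mul_sub]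
        refine (nrm_cs h0 _ _).trans ?_
        have h1 := nrm_mul_equiv (pow_equiv hS m) ha (y L m - y L' m)
        have h2 := nrm_nonneg (τ := τ) ((S ^ m) a * (y L m - y L' m))
        rw [smul_eq_mul]
        nlinarith [hh N]
    _ ≤ K * (ε / (K + 1)) := by
        rw [av_smul, smul_eq_mul]
        gcongr
    _ ≤ ε := by
        rw [mul_div_assoc', div_le_iff₀ (by positivity)]
        nlinarith

theorem convAll_succ {k : ℕ} (ih : ConvAll.{u} k) : ConvAll.{u} (k + 1) := by
  intro A _ _ τ h0 hb T hT hc f ε hε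
  set S := T 0 with hSdef
  set g := f 0 with hg
  have hS : ∀ a, τ (S a) = τ a := hT 0
  obtain ⟨C, hC, hP'⟩ := prod_bound h0 hb (fun i : Fin k => T i.succ) (fun i => hT i.succ)
    (fun i => f i.succ)
  set P : ℕ → A := fun n => ∏ i : Fin k, (T i.succ ^ n) (f i.succ) with hPdef
  have hP : ∀ n a, nrm τ (P n * a) ≤ C * nrm τ a := hP'
  obtain ⟨Cg, hCg, hgb⟩ := hb g
  let B : A → ℕ → A := fun x N => av (fun n => P n * (S ^ n) x) N
  let Bs : A → ℕ → A := fun x N => av (fun n => (S ^ n).symm (P n * x)) N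
  have hfB : ∀ N, av (fun n => ∏ i, (T i ^ n) (f i)) N = B g N := by
    intro N
    simp only [B]
    congr 1
    ext n
    rw [Fin.prod_univ_succ, mul_comm]
  have hB : ∀ x N, nrm τ (B x N) ≤ C * nrm τ x := by
    intro x N
    refine nrm_av_le_const h0 (fun n => ?_) N
    refine (hP n _).trans_eq ?_
    rw [nrm_equiv (pow_equiv hS n)]
  have hBs : ∀ x N, nrm τ (Bs x N) ≤ C * nrm τ x := by
    intro x N
    refine nrm_av_le_const h0 (fun n => ?_) N
    rw [nrm_equiv (T := (S ^ n).symm) (inv_equiv (pow_equiv hS n))]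
    exact hP n _
  have hadj : ∀ x a N, τ (B x N * a) = τ (x * Bs a N) := by
    intro x a N
    have h1 := map_av (τ ∘ₗ LinearMap.mulLeft ℝ a) (fun n => P n * (S ^ n) x) N
    have h2 := map_av (τ ∘ₗ LinearMap.mulLeft ℝ x) (fun n => (S ^ n).symm (P n * a)) N
    simp only [LinearMap.comp_apply, LinearMap.mulLeft_apply] at h1 h2
    rw [mul_comm (B x N) a]
    refine h1.trans (Eq.trans ?_ h2.symm)
    congr 1
    ext n
    rw [← pow_equiv hS n (x * (S ^ n).symm (P n * a)), map_mul (S ^ n), AlgEquiv.apply_symm_apply]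
    congr 1; ring
  have hcs : ∀ (h : ℕ → A), (∀ N, nrm τ (h N) ≤ 1) → ∀ N n b,
      |τ (h N * (P n * (S ^ n) b))| ≤ C * nrm τ b := by
    intro h hh N n b
    refine (nrm_cs h0 _ _).trans ?_
    have h1 := hP n ((S ^ n) b)
    rw [nrm_equiv (pow_equiv hS n)] at h1
    have h2 := nrm_nonneg (τ := τ) (P n * (S ^ n) b)
    nlinarith [hh N]
  let Φ : Set (A →ₗ[ℝ] ℝ) := {φ | ∃ U : Ultrafilter ℕ, (U : Filter ℕ) ≤ atTop ∧ ∃ h : ℕ → A,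
    (∀ N, nrm τ (h N) ≤ 1) ∧
    ∀ b, Tendsto (fun N => av (fun n => τ (h N * (P n * (S ^ n) b))) N) U (nhds (φ b))}
  have hΦ : ∀ φ ∈ Φ, ∀ b, |φ b| ≤ C * nrm τ b := by
    rintro φ ⟨U, hU, h, hh, hφ⟩ b
    exact le_of_tendsto' (hφ b).abs fun N => abs_av_le_const (fun n => hcs h hh N n b) N
  -- parameters
  set K0 := 2 * C * nrm τ g with hK0
  have hK0' : 0 ≤ K0 := by have := nrm_nonneg (τ := τ) g; positivity
  set δ := ε ^ 2 / (2 * (4 * K0 + 2 * C * K0 + 1)) with hδdef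
  have hδ : 0 < δ := by positivity
  obtain ⟨s, φ, hφ, hφs, hsu⟩ := hilbert_alg τ h0 Φ C hΦ g hδ
  set u := g - s with hu
  -- the uniform part
  have hunif : ∃ N1, ∀ N ≥ N1, nrm τ (B u N) ≤ 2 * δ := by
    by_contra hcon
    have hfr : ∃ᶠ N in atTop, 2 * δ < nrm τ (B u N) := by
      intro hev
      obtain ⟨N1, hN1⟩ := eventually_atTop.1 hev
      exact hcon ⟨N1, fun N hN => not_lt.1 (hN1 N hN)⟩
    have hne : (atTop ⊓ principal {N | 2 * δ < nrm τ (B u N)}).NeBot :=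
      frequently_mem_iff_neBot.1 hfr
    let U : Ultrafilter ℕ := Ultrafilter.of (atTop ⊓ principal {N | 2 * δ < nrm τ (B u N)})
    have hU' : (U : Filter ℕ) ≤ _ := Ultrafilter.of_le _
    have hU : (U : Filter ℕ) ≤ atTop := hU'.trans inf_le_left
    have hUev : ∀ᶠ N in (U : Filter ℕ), 2 * δ < nrm τ (B u N) :=
      le_principal_iff.1 (hU'.trans inf_le_right)
    let h : ℕ → A := fun N => (nrm τ (B u N))⁻¹ • B u N
    have hh : ∀ N, nrm τ (h N) ≤ 1 := by
      intro N
      simp only [h, nrm_smul, abs_inv, abs_of_nonneg (nrm_nonneg (τ := τ) (B u N))]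
      exact inv_mul_le_one
    let ψ : ℕ → A →ₗ[ℝ] ℝ := fun N =>
      { toFun := fun b => av (fun n => τ (h N * (P n * (S ^ n) b))) N
        map_add' := fun b c => by
          rw [← av_add]; congr 1; ext m; simp [mul_add]
        map_smul' := fun c b => by
          rw [RingHom.id_apply, ← av_smul]; congr 1; ext m; simp }
    obtain ⟨φ', hφ'⟩ := exists_ulim U ψ (fun b => ⟨C * nrm τ b, fun N =>
      abs_av_le_const (fun n => hcs h hh N n b) N⟩)
    have hmem : φ' ∈ Φ := ⟨U, hU, h, hh, hφ'⟩
    have h1 := (le_abs_self _).trans (hsu φ' hmem)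
    have h2 : 2 * δ ≤ φ' u := by
      refine ge_of_tendsto (hφ' u) ?_
      filter_upwards [hUev] with N hN
      have h3 := map_av (τ ∘ₗ LinearMap.mulLeft ℝ (h N)) (fun n => P n * (S ^ n) u) N
      simp only [LinearMap.comp_apply, LinearMap.mulLeft_apply] at h3
      have h4 : ψ N u = τ (h N * B u N) := h3.symm
      have hpos : 0 < nrm τ (B u N) := by linarith
      rw [h4]
      simp only [h, smul_mul_assoc, map_smul, smul_eq_mul]
      rw [← nrm_sq h0, pow_two, inv_mul_cancel_left₀ hpos.ne']
      exact hN.le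
    linarith
  obtain ⟨N1, hN1⟩ := hunif
  -- the structured part
  have hstruct : ∀ η > 0, ∃ L0 : ℕ, ∀ L ≥ L0, ∀ L' ≥ L0, ∀ a,
      (∀ x, nrm τ (a * x) ≤ 2 * (C * Cg) * nrm τ x) → |φ (Bs a L - Bs a L')| ≤ η := by
    clear hφs
    induction hφ using Submodule.span_induction with
    | mem φ hφ =>
      obtain ⟨U, hU, h, hh, hφ⟩ := hφ
      intro η hη
      exact dual_small ih h0 hb (fun i : Fin k => T i.succ) (fun i => hT i.succ)
        (fun i j => hc i.succ j.succ) S hS (fun i => hc 0 i.succ) (fun i => f i.succ) P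
        (fun n => rfl) C hP U hU h hh φ hφ _ (by positivity) η hη
    | zero => exact fun η hη => ⟨0, fun _ _ _ _ _ _ => by simpa using hη.le⟩
    | add φ1 φ2 _ _ h1 h2 =>
      intro η hη
      obtain ⟨L1, hL1⟩ := h1 (η / 2) (by positivity)
      obtain ⟨L2, hL2⟩ := h2 (η / 2) (by positivity)
      refine ⟨max L1 L2, fun L hL L' hL' a ha => ?_⟩
      have k1 := hL1 L (le_of_max_le_left hL) L' (le_of_max_le_left hL') a ha
      have k2 := hL2 L (le_of_max_le_right hL) L' (le_of_max_le_right hL') a ha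
      rw [LinearMap.add_apply]
      exact (abs_add_le _ _).trans (by linarith)
    | smul c φ1 _ h1 =>
      intro η hη
      obtain ⟨L1, hL1⟩ := h1 (η / (|c| + 1)) (by positivity)
      refine ⟨L1, fun L hL L' hL' a ha => ?_⟩
      have k1 := hL1 L hL L' hL' a ha
      rw [LinearMap.smul_apply, smul_eq_mul, abs_mul]
      rw [le_div_iff₀ (by positivity)] at k1
      nlinarith [abs_nonneg (φ1 (Bs a L - Bs a L'))]
  obtain ⟨L0, hL0⟩ := hstruct (ε ^ 2 / 2) (by positivity)
  refine ⟨max N1 L0, fun L hL L' hL' => ?_⟩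
  rw [hfB, hfB]
  set a := B g L - B g L' with ha
  have hLa := hN1 L (le_of_max_le_left hL)
  have hLb := hN1 L' (le_of_max_le_left hL')
  have hmul : ∀ N x, nrm τ (B g N * x) ≤ C * Cg * nrm τ x := by
    intro N x
    have h1 := map_av (LinearMap.mulRight ℝ x) (fun n => P n * (S ^ n) g) N
    simp only [LinearMap.mulRight_apply] at h1
    have h2 : B g N * x = _ := h1
    rw [h2]
    refine nrm_av_le_const h0 (fun n => ?_) N
    rw [mul_assoc, mul_assoc]
    refine (hP n _).trans ?_
    gcongr
    exact nrm_mul_equiv (pow_equiv hS n) hgb x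
  have hax : ∀ x, nrm τ (a * x) ≤ 2 * (C * Cg) * nrm τ x := by
    intro x
    rw [ha, sub_mul]
    refine (nrm_sub h0 _ _).trans ?_
    linarith [hmul L x, hmul L' x]
  have hstr := hL0 L (le_of_max_le_right hL) L' (le_of_max_le_right hL') a hax
  have han : nrm τ a ≤ K0 := by
    refine (nrm_sub h0 _ _).trans ?_
    linarith [hB g L, hB g L']
  have hBsub : ∀ N, B g N = B u N + B s N := by
    intro N
    simp only [B]
    rw [← av_add]
    congr 1; ext n
    rw [hu, map_sub]; ring
  have hsplit : τ (a * a) = τ ((B u L - B u L') * a) + τ (s * (Bs a L - Bs a L')) := by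
    have q1 : τ (s * (Bs a L - Bs a L')) = τ ((B s L - B s L') * a) := by
      rw [mul_sub s, sub_mul, map_sub, map_sub, hadj, hadj]
    have q2 : a = (B u L + B s L) - (B u L' + B s L') := by
      rw [ha, hBsub L, hBsub L']
    rw [q1, ← map_add]
    congr 1
    linear_combination a * q2
  have e1 : |τ ((B u L - B u L') * a)| ≤ 4 * δ * K0 := by
    refine (nrm_cs h0 _ _).trans ?_
    have := nrm_sub h0 (B u L) (B u L')
    have h4 : nrm τ (B u L - B u L') ≤ 4 * δ := by linarith
    exact mul_le_mul h4 han (nrm_nonneg _) (by positivity)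
  have e2 := hφs (Bs a L - Bs a L')
  have e3 : nrm τ (Bs a L - Bs a L') ≤ 2 * C * K0 := by
    have := nrm_sub h0 (Bs a L) (Bs a L')
    have := hBs a L
    have := hBs a L'
    nlinarith
  have e4 : δ * nrm τ (Bs a L - Bs a L') ≤ δ * (2 * C * K0) := by gcongr
  have e5 : δ * (4 * K0 + 2 * C * K0 + 1) = ε ^ 2 / 2 := by
    rw [hδdef]; field_simp
  have e6 : τ (a * a) ≤ ε ^ 2 := by
    rw [hsplit]
    have g1 := (abs_le.1 e1).2
    have g2 := (abs_le.1 e2).1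
    have g3 := (abs_le.1 hstr).2
    nlinarith
  exact Real.sqrt_le_iff.2 ⟨hε.le, e6⟩

theorem convAll (k : ℕ) : ConvAll.{u} k := by
  induction k with
  | zero => exact convAll_zero
  | succ k ih => exact convAll_succ ih

/-- Bounded measurable functions. -/
def bmAlg (X : Type u) [MeasurableSpace X] : Subalgebra ℝ (X → ℝ) where
  carrier := {f | Measurable f ∧ ∃ C, ∀ x, |f x| ≤ C}
  mul_mem' := by
    rintro f g ⟨hf, C, hC⟩ ⟨hg, D, hD⟩
    refine ⟨hf.mul hg, C * D, fun x => ?_⟩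
    rw [Pi.mul_apply, abs_mul]
    exact mul_le_mul (hC x) (hD x) (abs_nonneg _) ((abs_nonneg _).trans (hC x))
  add_mem' := by
    rintro f g ⟨hf, C, hC⟩ ⟨hg, D, hD⟩
    exact ⟨hf.add hg, C + D, fun x => (abs_add_le _ _).trans (add_le_add (hC x) (hD x))⟩
  algebraMap_mem' := by
    intro r
    exact ⟨measurable_const, |r|, fun x => le_refl _⟩

theorem bmAlg_integrable {X : Type u} [MeasurableSpace X] (μ : Measure X)
    [IsProbabilityMeasure μ] (f : bmAlg X) : Integrable f.1 μ := by
  obtain ⟨hf, C, hC⟩ := f.2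
  exact Integrable.of_bound hf.aestronglyMeasurable C (ae_of_all _ hC)

theorem bmAlg_memLp {X : Type u} [MeasurableSpace X] (μ : Measure X)
    [IsProbabilityMeasure μ] (f : bmAlg X) : MemLp f.1 2 μ := by
  obtain ⟨hf, C, hC⟩ := f.2
  exact MemLp.of_bound hf.aestronglyMeasurable C (ae_of_all _ hC)

/-- The integral as a functional. -/
noncomputable def bmInt {X : Type u} [MeasurableSpace X] (μ : Measure X)
    [IsProbabilityMeasure μ] : bmAlg X →ₗ[ℝ] ℝ where
  toFun f := ∫ x, f.1 x ∂μ
  map_add' f g := integral_add (bmAlg_integrable μ f) (bmAlg_integrable μ g)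
  map_smul' c f := integral_const_mul c _

/-- Composition. -/
def bmHom {X : Type u} [MeasurableSpace X] (T : X → X) (hT : Measurable T) :
    bmAlg X →ₐ[ℝ] bmAlg X where
  toFun f := ⟨f.1 ∘ T, f.2.1.comp hT, f.2.2.imp fun C hC x => hC (T x)⟩
  map_one' := rfl
  map_mul' _ _ := rfl
  map_zero' := rfl
  map_add' _ _ := rfl
  commutes' _ := rfl

/-- Composition with an invertible map. -/
def bmEquiv {X : Type u} [MeasurableSpace X] (T T' : X → X) (hT : Measurable T)
    (hT' : Measurable T') (h1 : Function.LeftInverse T' T) (h2 : Function.RightInverse T' T) :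
    bmAlg X ≃ₐ[ℝ] bmAlg X :=
  AlgEquiv.ofAlgHom (bmHom T hT) (bmHom T' hT')
    (by ext f x; exact congrArg f.1 (h1 x)) (by ext f x; exact congrArg f.1 (h2 x))

theorem bmEquiv_pow {X : Type u} [MeasurableSpace X] (T T' : X → X) (hT : Measurable T)
    (hT' : Measurable T') (h1 : Function.LeftInverse T' T) (h2 : Function.RightInverse T' T)
    (n : ℕ) (f : bmAlg X) (x : X) :
    ((bmEquiv T T' hT hT' h1 h2 ^ n) f).1 x = f.1 (T^[n] x) := by
  induction n generalizing x with
  | zero => rfl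
  | succ n ih =>
    rw [pow_succ', AlgEquiv.mul_apply]
    exact ih (T x)

theorem bm_norm {X : Type u} [MeasurableSpace X] (μ : Measure X)
    [IsProbabilityMeasure μ] (f : bmAlg X) :
    ‖(bmAlg_memLp μ f).toLp f.1‖ = nrm (bmInt μ) f := by
  unfold nrm
  rw [← Real.sqrt_sq (norm_nonneg ((bmAlg_memLp μ f).toLp f.1)), ← real_inner_self_eq_norm_sq,
    L2.inner_def]
  congr 1
  refine integral_congr_ae ?_
  filter_upwards [(bmAlg_memLp μ f).coeFn_toLp] with x hx
  rw [hx]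
  rfl

end MEA

/-- **Convergence of multiple ergodic averages for commuting transformations.**
If `T 1, …, T l` are commuting invertible ergodic measure preserving transformations of a
probability space with `T i ∘ (T j)⁻¹` ergodic for `i ≠ j`, then for bounded measurable
`f 1, …, f l` the averages `(1/N) ∑_{n<N} ∏ᵢ fᵢ(Tᵢⁿ x)` converge in `L²(μ)`. -/
theorem multiple_ergodic_averages_converge {X : Type*} [MeasurableSpace X]
    (μ : Measure X) [IsProbabilityMeasure μ] (l : ℕ) (hl : 1 ≤ l)
    (T Tinv : Fin l → X → X)
    (hTinvMeas : ∀ i, Measurable (Tinv i))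
    (hinv : ∀ i, Function.LeftInverse (Tinv i) (T i) ∧ Function.RightInverse (Tinv i) (T i))
    (hcomm : ∀ i j, T i ∘ T j = T j ∘ T i)
    (herg : ∀ i, Ergodic (T i) μ)
    (hergdiff : ∀ i j, i ≠ j → Ergodic (T i ∘ Tinv j) μ)
    (f : Fin l → X → ℝ) (hf : ∀ i, Measurable (f i)) (hbd : ∀ i, ∃ C, ∀ x, |f i x| ≤ C) :
    ∃ F : X → ℝ, Measurable F ∧
      Filter.Tendsto
        (fun N : ℕ => eLpNorm
          (fun x => ((N : ℝ)⁻¹ * ∑ n ∈ Finset.range N, ∏ i, f i ((T i)^[n] x)) - F x) 2 μ)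
        Filter.atTop (nhds 0) := by
  let A := bmAlg X
  let τ : A →ₗ[ℝ] ℝ := bmInt μ
  have h0 : ∀ a : A, 0 ≤ τ (a * a) := fun a => integral_nonneg fun x => mul_self_nonneg (a.1 x)
  have hb : ∀ g : A, ∃ C : ℝ, 0 ≤ C ∧ ∀ a, nrm τ (g * a) ≤ C * nrm τ a := by
    intro g
    obtain ⟨C, hC⟩ := g.2.2
    refine ⟨|C|, abs_nonneg C, fun a => ?_⟩
    apply Real.sqrt_le_iff.2
    refine ⟨mul_nonneg (abs_nonneg _) (nrm_nonneg _), ?_⟩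
    rw [mul_pow, nrm_sq h0]
    have h1 : τ (g * a * (g * a)) ≤ τ (|C| ^ 2 • (a * a)) := by
      refine integral_mono (bmAlg_integrable μ _) (bmAlg_integrable μ _) fun x => ?_
      change g.1 x * a.1 x * (g.1 x * a.1 x) ≤ |C| ^ 2 * (a.1 x * a.1 x)
      have h2 : g.1 x ^ 2 ≤ |C| ^ 2 := by
        rw [sq_abs]; exact sq_le_sq' (abs_le.1 (hC x)).1 (abs_le.1 (hC x)).2
      nlinarith [mul_self_nonneg (a.1 x)]
    rwa [map_smul, smul_eq_mul] at h1
  let S : Fin l → A ≃ₐ[ℝ] A := fun i =>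
    bmEquiv (T i) (Tinv i) (herg i).measurable (hTinvMeas i) (hinv i).1 (hinv i).2
  have hS : ∀ i a, τ (S i a) = τ a := by
    intro i a
    have hmp := (herg i).toMeasurePreserving
    have h1 := integral_map (μ := μ) hmp.measurable.aemeasurable (f := a.1)
      a.2.1.aestronglyMeasurable
    rw [hmp.map_eq] at h1
    exact h1.symm
  have hSc : ∀ i j, Commute (S i) (S j) := by
    intro i j
    ext a x
    exact congrArg a.1 (congrFun (hcomm j i) x)
  let f' : Fin l → A := fun i => ⟨f i, hf i, hbd i⟩
  let a : ℕ → A := fun N => av (fun n => ∏ i, (S i ^ n) (f' i)) N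
  have hconv : ∀ ε > 0, ∃ N0 : ℕ, ∀ N ≥ N0, ∀ N' ≥ N0, nrm τ (a N - a N') ≤ ε :=
    fun ε hε => convAll l A τ h0 hb S hS hSc f' ε hε
  have ha : ∀ N x, (a N).1 x = (N : ℝ)⁻¹ * ∑ n ∈ Finset.range N, ∏ i, f i ((T i)^[n] x) := by
    intro N x
    let ev : A →ₐ[ℝ] ℝ := (Pi.evalAlgHom ℝ (fun _ : X => ℝ) x).comp (bmAlg X).val
    have h2 := map_av ev.toLinearMap (fun n => ∏ i, (S i ^ n) (f' i)) N
    refine h2.trans ?_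
    simp only [av, smul_eq_mul, AlgHom.toLinearMap_apply, map_prod]
    congr 1
    refine Finset.sum_congr rfl fun n _ => Finset.prod_congr rfl fun i _ => ?_
    exact bmEquiv_pow _ _ _ _ _ _ n (f' i) x
  let b : ℕ → Lp ℝ 2 μ := fun N => (bmAlg_memLp μ (a N)).toLp (a N).1
  have hcs : CauchySeq b := by
    rw [Metric.cauchySeq_iff]
    intro ε hε
    obtain ⟨N0, hN0⟩ := hconv (ε / 2) (by positivity)
    refine ⟨N0, fun N hN N' hN' => ?_⟩
    rw [dist_eq_norm]
    have h3 : b N - b N' = (bmAlg_memLp μ (a N - a N')).toLp (a N - a N').1 :=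
      (MemLp.toLp_sub _ _).symm
    rw [h3, bm_norm]
    linarith [hN0 N hN N' hN']
  obtain ⟨G, hG⟩ := cauchySeq_tendsto_of_complete hcs
  refine ⟨G, (Lp.stronglyMeasurable G).measurable, ?_⟩
  have h4 := (Lp.tendsto_Lp_iff_tendsto_eLpNorm' b G).1 hG
  refine h4.congr fun N => ?_
  refine eLpNorm_congr_ae ?_
  filter_upwards [(bmAlg_memLp μ (a N)).coeFn_toLp] with x hx
  rw [Pi.sub_apply, hx, ha]
end

section
/- Let $T$ and $S$ be commuting invertible measure preserving transformations of a probability space $(X,\mathcal{X},\mu)$, both ergodic, and let $\mu^{[k]}_T$ and $\mu^{[k]}_S$ be the box measures on $X^{2^k}$ defined inductively by relatively independent squaring over the invariant $\sigma$-algebras of $T^{[k]}$ and $S^{[k]}$ respectively. Then $\mu^{[k]}_T = \mu^{[k]}_S$ for every $k\geq 0$. -/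
open MeasureTheory Filter Finset

namespace HKaux

/-- bounded measurable functions -/
def BM {Y : Type*} [MeasurableSpace Y] (f : Y → ℝ) : Prop :=
  Measurable f ∧ ∃ C, ∀ x, |f x| ≤ C

section BMsec
variable {Y Z : Type*} [MeasurableSpace Y] [MeasurableSpace Z]

theorem BM.mul {f g : Y → ℝ} (hf : BM f) (hg : BM g) : BM (fun x => f x * g x) := by
  obtain ⟨hf, C, hC⟩ := hf
  obtain ⟨hg, D, hD⟩ := hg
  refine ⟨hf.mul hg, C * D, fun x => ?_⟩
  rw [abs_mul]
  exact mul_le_mul (hC x) (hD x) (abs_nonneg _) ((abs_nonneg _).trans (hC x))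

theorem BM.const (c : ℝ) : BM (fun _ : Y => c) := ⟨measurable_const, |c|, fun _ => le_rfl⟩

theorem BM.add {f g : Y → ℝ} (hf : BM f) (hg : BM g) : BM (fun x => f x + g x) := by
  obtain ⟨hf, C, hC⟩ := hf
  obtain ⟨hg, D, hD⟩ := hg
  exact ⟨hf.add hg, C + D, fun x => (abs_add_le _ _).trans (add_le_add (hC x) (hD x))⟩

theorem BM.sum {κ : Type*} (s : Finset κ) {f : κ → Y → ℝ} (hf : ∀ i ∈ s, BM (f i)) :
    BM (fun x => ∑ i ∈ s, f i x) := by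
  classical
  induction s using Finset.induction_on with
  | empty => simpa using BM.const (0 : ℝ)
  | insert a s ha ih =>
    simp only [Finset.sum_insert ha]
    exact (hf a (by simp)).add (ih fun i hi => hf i (by simp [hi]))

theorem BM.comp {f : Z → ℝ} (hf : BM f) {U : Y → Z} (hU : Measurable U) :
    BM (fun x => f (U x)) := by
  obtain ⟨hf, C, hC⟩ := hf
  exact ⟨hf.comp hU, C, fun x => hC _⟩

theorem BM.tensor {f : Y → ℝ} {g : Z → ℝ} (hf : BM f) (hg : BM g) :
    BM (fun p : Y × Z => f p.1 * g p.2) :=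
  (hf.comp measurable_fst).mul (hg.comp measurable_snd)

theorem BM.indicator {s : Set Y} (hs : MeasurableSet s) : BM (s.indicator (fun _ => (1 : ℝ))) := by
  refine ⟨measurable_const.indicator hs, 1, fun x => ?_⟩
  by_cases h : x ∈ s <;> simp [h]

theorem BM.memLp {f : Y → ℝ} (hf : BM f) (ν : Measure Y) [IsFiniteMeasure ν] (p : ENNReal) :
    MemLp f p ν := by
  obtain ⟨hf, C, hC⟩ := hf
  exact MemLp.of_bound hf.aestronglyMeasurable C (Eventually.of_forall hC)

theorem BM.integrable {f : Y → ℝ} (hf : BM f) (ν : Measure Y) [IsFiniteMeasure ν] :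
    Integrable f ν := memLp_one_iff_integrable.1 (hf.memLp ν 1)

end BMsec

/-- ergodic averages -/
noncomputable def av {Y : Type*} (U : Y → Y) (f : Y → ℝ) (N : ℕ) (x : Y) : ℝ :=
  (N : ℝ)⁻¹ * ∑ n ∈ range N, f (U^[n] x)

variable {Y : Type*} [MeasurableSpace Y]

theorem BM.av {f : Y → ℝ} (hf : BM f) {U : Y → Y} (hU : Measurable U) (N : ℕ) : BM (av U f N) :=
  (BM.const _).mul (BM.sum _ fun n _ => hf.comp (hU.iterate n))

theorem invSigma_le (U : Y → Y) : invSigma U ≤ (inferInstance : MeasurableSpace Y) :=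
  fun _ hs => hs.1

theorem inv_of_sm {U : Y → Y} {h : Y → ℝ} (hh : StronglyMeasurable[invSigma U] h) (x : Y) :
    h (U x) = h x := by
  have h1 : MeasurableSet[invSigma U] (h ⁻¹' {h x}) := hh.measurable (measurableSet_singleton _)
  have h2 : x ∈ U ⁻¹' (h ⁻¹' {h x}) := by rw [h1.2]; rfl
  exact h2

theorem sm_of_inv {U : Y → Y} {h : Y → ℝ} (hm : Measurable h) (hh : ∀ x, h (U x) = h x) :
    StronglyMeasurable[invSigma U] h := by
  have : Measurable[invSigma U] h := by
    intro s hs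
    refine ⟨hm hs, ?_⟩
    ext x
    simp [hh]
  exact this.stronglyMeasurable

theorem inv_iter {U : Y → Y} {h : Y → ℝ} (hh : ∀ x, h (U x) = h x) (n : ℕ) (x : Y) :
    h (U^[n] x) = h x := by
  induction n generalizing x with
  | zero => rfl
  | succ n ih => rw [Function.iterate_succ_apply, ih, hh]

section ME
variable (ν : Measure Y) [IsProbabilityMeasure ν]

theorem integral_av_mul {U : Y → Y} (hU : MeasurePreserving U ν ν)
    {h f : Y → ℝ} (hh : ∀ x, h (U x) = h x) (hm : AEStronglyMeasurable h ν)
    (hb : ∃ C, ∀ᵐ x ∂ν, |h x| ≤ C)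
    (hf : BM f) {N : ℕ} (hN : N ≠ 0) : ∫ x, h x * av U f N x ∂ν = ∫ x, h x * f x ∂ν := by
  obtain ⟨C, hC⟩ := hb
  have key : ∀ n, ∫ x, h x * f (U^[n] x) ∂ν = ∫ x, h x * f x ∂ν := by
    intro n
    have h1 : ∫ x, h x * f (U^[n] x) ∂ν = ∫ x, h (U^[n] x) * f (U^[n] x) ∂ν := by
      simp only [inv_iter hh]
    rw [h1]
    have hp := hU.iterate n
    conv_rhs => rw [← hp.map_eq]
    rw [integral_map hp.measurable.aemeasurable]
    rw [hp.map_eq]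
    exact hm.mul hf.1.aestronglyMeasurable
  have e : ∀ x, h x * av U f N x = (N : ℝ)⁻¹ * ∑ n ∈ range N, h x * f (U^[n] x) := by
    intro x; simp only [av, Finset.mul_sum]; refine Finset.sum_congr rfl fun n _ => by ring
  simp only [e]
  rw [integral_const_mul, integral_finsetSum]
  · simp only [key]
    simp only [sum_const, card_range, nsmul_eq_mul]
    have : (N : ℝ) ≠ 0 := by exact_mod_cast hN
    field_simp
  · intro n _
    exact ((hf.comp (hU.measurable.iterate n)).integrable ν).bdd_mul hm hC

theorem me_strong {U : Y → Y} (hU : MeasurePreserving U ν ν)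
    {f : Y → ℝ} (hf : BM f) :
    ∃ G : Lp ℝ 2 ν, (G =ᵐ[ν] ν[f | invSigma U]) ∧
      Tendsto (fun N => ((hf.av hU.measurable N).memLp ν 2).toLp (av U f N)) atTop (nhds G) := by
  let K : Lp ℝ 2 ν →L[ℝ] Lp ℝ 2 ν :=
    (Lp.compMeasurePreservingₗᵢ ℝ U hU).toContinuousLinearMap
  have hK : ‖K‖ ≤ 1 := LinearIsometry.norm_toContinuousLinearMap_le _
  have hlim := K.tendsto_birkhoffAverage_orthogonalProjection hK ((hf.memLp ν 2).toLp f)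
  set G : Lp ℝ 2 ν := ((K.eqLocus (1 : Lp ℝ 2 ν →L[ℝ] Lp ℝ 2 ν)).orthogonalProjectionOnto
    ((hf.memLp ν 2).toLp f) : Lp ℝ 2 ν) with hG
  have hKG : K G = G := ((K.eqLocus (1 : Lp ℝ 2 ν →L[ℝ] Lp ℝ 2 ν)).orthogonalProjectionOnto
    ((hf.memLp ν 2).toLp f)).2
  have hiter : ∀ n, K^[n] ((hf.memLp ν 2).toLp f) =
      ((hf.comp (hU.measurable.iterate n)).memLp ν 2).toLp (fun x => f (U^[n] x)) := by
    intro n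
    have h1 : (K : Lp ℝ 2 ν → Lp ℝ 2 ν) = Lp.compMeasurePreserving U hU := rfl
    rw [h1, Lp.compMeasurePreserving_iterate hU n, Lp.toLp_compMeasurePreserving]
    rfl
  have hav : ∀ N, birkhoffAverage ℝ K _root_.id N ((hf.memLp ν 2).toLp f) =
      ((hf.av hU.measurable N).memLp ν 2).toLp (av U f N) := by
    intro N
    simp only [birkhoffAverage, birkhoffSum, id, hiter]
    apply Lp.ext
    refine (Lp.coeFn_smul _ _).trans ?_
    refine EventuallyEq.trans ?_ (MemLp.coeFn_toLp _).symm
    have h2 : ∀ᵐ x ∂ν, ∀ n, (((hf.comp (hU.measurable.iterate n)).memLp ν 2).toLp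
        (fun x => f (U^[n] x))) x = f (U^[n] x) := ae_all_iff.2 fun n => MemLp.coeFn_toLp _
    have h3 := Lp.coeFn_finsetSum (range N) (fun n =>
      (((hf.comp (hU.measurable.iterate n)).memLp ν 2).toLp (fun x => f (U^[n] x))))
    filter_upwards [h2, h3] with x hx hx3
    simp only [Pi.smul_apply, smul_eq_mul, hx3, av, Finset.sum_apply, hx]
  simp only [hav] at hlim
  refine ⟨G, ?_, hlim⟩
  -- invariant version of G
  obtain ⟨g0, hg0m, hg0⟩ := (Lp.aestronglyMeasurable G).aemeasurable
  have hinv : ∀ᵐ x ∂ν, g0 (U x) = g0 x := by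
    have h1 : K G =ᵐ[ν] G ∘ U := Lp.coeFn_compMeasurePreserving G hU
    rw [hKG] at h1
    have h2 := hU.quasiMeasurePreserving.ae_eq_comp hg0
    filter_upwards [h1, h2, hg0] with x a b c
    simp only [Function.comp] at a b
    rw [← b, ← a, c]
  have hinv' : ∀ᵐ x ∂ν, ∀ n, g0 (U^[n] x) = g0 x := by
    have : ∀ᵐ x ∂ν, ∀ n, g0 (U (U^[n] x)) = g0 (U^[n] x) :=
      ae_all_iff.2 fun n => (hU.iterate n).quasiMeasurePreserving.ae hinv
    filter_upwards [this] with x hx n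
    induction n with
    | zero => rfl
    | succ n ih => rw [Function.iterate_succ_apply', hx, ih]
  let g : Y → ℝ := fun x => limsup (fun n => g0 (U^[n] x)) atTop
  have hgm : Measurable g := Measurable.limsup fun n => hg0m.comp (hU.measurable.iterate n)
  have hgi : ∀ x, g (U x) = g x := by
    intro x
    have := limsup_nat_add (fun n => g0 (U^[n] x)) 1
    simpa only [Function.iterate_succ_apply] using this
  have hgG : G =ᵐ[ν] g := by
    filter_upwards [hg0, hinv'] with x h1 h2
    simp only [g, h2]
    rw [h1]; simp
  refine hgG.trans ?_
  have hgint : Integrable g ν := ((Lp.memLp G).integrable (by norm_num)).congr hgG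
  refine ae_eq_condExp_of_forall_setIntegral_eq (invSigma_le U) (hf.integrable ν)
    (fun s _ _ => hgint.integrableOn) ?_ (sm_of_inv hgm hgi).aestronglyMeasurable
  intro s hs _
  have hsm : MeasurableSet s := hs.1
  have hi : BM (s.indicator (fun _ => (1 : ℝ))) := BM.indicator hsm
  have hlim2 := (tendsto_const_nhds (x := (hi.memLp ν 2).toLp _)).inner (𝕜 := ℝ) hlim
  have e1 : ∀ h : Y → ℝ, ∫ x in s, h x ∂ν = ∫ x, s.indicator (fun _ => (1 : ℝ)) x * h x ∂ν := by
    intro h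
    rw [← integral_indicator hsm]
    congr 1; ext x
    by_cases hx : x ∈ s <;> simp [hx]
  have e2 : ∀ N : ℕ, N ≠ 0 → inner ℝ ((hi.memLp ν 2).toLp _)
      (((hf.av hU.measurable N).memLp ν 2).toLp (av U f N)) = ∫ x in s, f x ∂ν := by
    intro N hN
    rw [e1, ← integral_av_mul ν hU ?_ hi.1.aestronglyMeasurable ⟨1, ?_⟩ hf hN]
    · rw [L2.inner_def]
      apply integral_congr_ae
      filter_upwards [MemLp.coeFn_toLp (hi.memLp ν 2),
        MemLp.coeFn_toLp ((hf.av hU.measurable N).memLp ν 2)] with x h1 h2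
      rw [h1, h2]; simp [mul_comm]
    · intro x
      have : U x ∈ s ↔ x ∈ s := by
        have := hs.2
        rw [← Set.mem_preimage, this]
      by_cases hx : x ∈ s <;> simp [hx, this]
    · refine Eventually.of_forall fun x => ?_
      by_cases h : x ∈ s <;> simp [h]
  have e3 := tendsto_nhds_unique hlim2 (tendsto_const_nhds.congr'
    ((eventually_ne_atTop 0).mono fun N hN => (e2 N hN).symm))
  rw [← e3, e1, L2.inner_def]
  apply integral_congr_ae
  filter_upwards [MemLp.coeFn_toLp (hi.memLp ν 2), hgG] with x h1 h2
  rw [h1, h2]; simp [mul_comm]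

theorem condExp_bdd (U : Y → Y) {f : Y → ℝ} (hf : BM f) :
    ∃ C, ∀ᵐ x ∂ν, |(ν[f | invSigma U]) x| ≤ C := by
  obtain ⟨hm, C, hC⟩ := hf
  exact ⟨_, ae_bdd_abs_condExp_of_ae_bdd_abs (Eventually.of_forall hC)⟩

theorem integral_P_mul (U : Y → Y) {f g : Y → ℝ} (hf : BM f) (hg : BM g) :
    ∫ x, (ν[g | invSigma U]) x * f x ∂ν =
    ∫ x, (ν[f | invSigma U]) x * (ν[g | invSigma U]) x ∂ν := by
  obtain ⟨C, hC⟩ := condExp_bdd ν U hg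
  have hint : Integrable (fun x => (ν[g | invSigma U]) x * f x) ν :=
    (hf.integrable ν).bdd_mul integrable_condExp.aestronglyMeasurable hC
  have h1 := condExp_mul_of_stronglyMeasurable_left (μ := ν) (m := invSigma U)
    (f := ν[g | invSigma U]) (g := f) stronglyMeasurable_condExp hint (hf.integrable ν)
  have h2 := integral_condExp (μ := ν) (f := (ν[g | invSigma U]) * f) (invSigma_le U)
  rw [integral_congr_ae h1] at h2
  refine Eq.trans h2.symm ?_
  congr 1; ext x; simp [mul_comm]

theorem me_weak {U : Y → Y} (hU : MeasurePreserving U ν ν)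
    {f g : Y → ℝ} (hf : BM f) (hg : BM g) :
    Tendsto (fun N : ℕ => (N : ℝ)⁻¹ * ∑ n ∈ range N, ∫ x, f x * g (U^[n] x) ∂ν) atTop
      (nhds (∫ x, (ν[f | invSigma U]) x * (ν[g | invSigma U]) x ∂ν)) := by
  obtain ⟨G, hG, hlim⟩ := me_strong ν hU hg
  have hlim2 := (tendsto_const_nhds (x := (hf.memLp ν 2).toLp _)).inner (𝕜 := ℝ) hlim
  have e : inner ℝ ((hf.memLp ν 2).toLp _) G =
      ∫ x, (ν[f | invSigma U]) x * (ν[g | invSigma U]) x ∂ν := by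
    rw [← integral_P_mul ν U hf hg, L2.inner_def]
    apply integral_congr_ae
    filter_upwards [MemLp.coeFn_toLp (hf.memLp ν 2), hG] with x h1 h2
    rw [h1, h2]; simp
  rw [← e]
  refine hlim2.congr fun N => ?_
  rw [L2.inner_def, ← integral_finsetSum, ← integral_const_mul]
  · apply integral_congr_ae
    filter_upwards [MemLp.coeFn_toLp (hf.memLp ν 2),
        MemLp.coeFn_toLp ((hg.av hU.measurable N).memLp ν 2)] with x h1 h2
    rw [h1, h2]
    simp only [av, ← Finset.mul_sum, RCLike.inner_apply, conj_trivial]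
    ring
  · intro n _
    exact (hf.mul (hg.comp (hU.measurable.iterate n))).integrable ν

theorem me_sq {U : Y → Y} (hU : MeasurePreserving U ν ν)
    {f : Y → ℝ} (hf : BM f) :
    Tendsto (fun N : ℕ => ∫ x, av U f N x * av U f N x ∂ν) atTop
      (nhds (∫ x, (ν[f | invSigma U]) x * (ν[f | invSigma U]) x ∂ν)) := by
  obtain ⟨G, hG, hlim⟩ := me_strong ν hU hf
  have hlim2 := hlim.inner (𝕜 := ℝ) hlim
  have e : inner ℝ G G =
      ∫ x, (ν[f | invSigma U]) x * (ν[f | invSigma U]) x ∂ν := by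
    rw [L2.inner_def]
    apply integral_congr_ae
    filter_upwards [hG] with x h2
    rw [h2]; simp [pow_two]
  rw [← e]
  refine hlim2.congr fun N => ?_
  rw [L2.inner_def]
  apply integral_congr_ae
  filter_upwards [MemLp.coeFn_toLp ((hf.av hU.measurable N).memLp ν 2)] with x h2
  rw [h2]
  simp [pow_two]

theorem sq_le {U : Y → Y} (hU : MeasurePreserving U ν ν)
    {f : Y → ℝ} (hf : BM f) {N : ℕ} (hN : N ≠ 0) :
    ∫ x, (ν[f | invSigma U]) x * (ν[f | invSigma U]) x ∂ν ≤
      ∫ x, av U f N x * av U f N x ∂ν := by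
  obtain ⟨C, hC⟩ := condExp_bdd ν U hf
  have hsm : AEStronglyMeasurable (ν[f | invSigma U]) ν := integrable_condExp.aestronglyMeasurable
  have h1 := integral_av_mul ν hU (inv_of_sm stronglyMeasurable_condExp) hsm ⟨C, hC⟩ hf hN
  rw [integral_P_mul ν U hf hf] at h1
  have hA := hf.av hU.measurable N
  have i1 : Integrable (fun x => (ν[f | invSigma U]) x * av U f N x) ν :=
    (hA.integrable ν).bdd_mul hsm hC
  have i2 : Integrable (fun x => (ν[f | invSigma U]) x * (ν[f | invSigma U]) x) ν :=
    integrable_condExp.bdd_mul hsm hC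
  have i3 : Integrable (fun x => av U f N x * av U f N x) ν := (hA.mul hA).integrable ν
  have h0 : 0 ≤ ∫ x, (av U f N x * av U f N x - (ν[f | invSigma U]) x * av U f N x)
      - ((ν[f | invSigma U]) x * av U f N x - (ν[f | invSigma U]) x * (ν[f | invSigma U]) x) ∂ν :=
    integral_nonneg fun x => by
      have := mul_self_nonneg (av U f N x - (ν[f | invSigma U]) x)
      simp only [Pi.zero_apply]
      linarith
  rw [integral_sub (by exact i3.sub i1) (by exact i1.sub i2), integral_sub i3 i1, integral_sub i1 i2, h1] at h0
  linarith

end ME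

/-- `ρ` is the relatively independent square of `ν` over the `U`-invariant sets. -/
def IsSq (ν : Measure Y) (U : Y → Y) (ρ : Measure (Y × Y)) : Prop :=
  ∀ F' F'' : Y → ℝ, Measurable F' → Measurable F'' →
    (∃ C, ∀ x, |F' x| ≤ C) → (∃ C, ∀ x, |F'' x| ≤ C) →
    ∫ p, F' p.1 * F'' p.2 ∂ρ =
      ∫ x, (ν[F' | invSigma U]) x * (ν[F'' | invSigma U]) x ∂ν

/-- the product map -/
def dbl (U : Y → Y) : Y × Y → Y × Y := fun p => (U p.1, U p.2)

theorem dbl_iter (U : Y → Y) (n : ℕ) (p : Y × Y) : (dbl U)^[n] p = (U^[n] p.1, U^[n] p.2) := by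
  induction n generalizing p with
  | zero => rfl
  | succ n ih => rw [Function.iterate_succ_apply, ih]; rfl

theorem IsSq.eq {ν : Measure Y} {U : Y → Y} {ρ : Measure (Y × Y)} (h : IsSq ν U ρ)
    {f g : Y → ℝ} (hf : BM f) (hg : BM g) : ∫ p, f p.1 * g p.2 ∂ρ =
      ∫ x, (ν[f | invSigma U]) x * (ν[g | invSigma U]) x ∂ν := h f g hf.1 hg.1 hf.2 hg.2

theorem IsSq.isProb {ν : Measure Y} [IsProbabilityMeasure ν] {U : Y → Y} {ρ : Measure (Y × Y)}
    (h : IsSq ν U ρ) : IsProbabilityMeasure ρ := by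
  have := h.eq (BM.const 1) (BM.const 1)
  rw [condExp_const (invSigma_le U)] at this
  simp only [mul_one, integral_const, smul_eq_mul, probReal_univ] at this
  refine ⟨?_⟩
  have h2 : ρ.real Set.univ = 1 := this
  rw [Measure.real] at h2
  rwa [ENNReal.toReal_eq_one_iff] at h2

theorem IsSq.weak {ν : Measure Y} [IsProbabilityMeasure ν] {U : Y → Y}
    (hU : MeasurePreserving U ν ν) {ρ : Measure (Y × Y)}
    (h : IsSq ν U ρ) {f g : Y → ℝ} (hf : BM f) (hg : BM g) :
    Tendsto (fun N : ℕ => (N : ℝ)⁻¹ * ∑ n ∈ range N, ∫ x, f x * g (U^[n] x) ∂ν) atTop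
      (nhds (∫ p, f p.1 * g p.2 ∂ρ)) := by
  rw [h.eq hf hg]
  exact me_weak ν hU hf hg

theorem IsSq.weak_sum {ν : Measure Y} [IsProbabilityMeasure ν] {U : Y → Y}
    (hU : MeasurePreserving U ν ν) {ρ : Measure (Y × Y)}
    (h : IsSq ν U ρ) {κ : Type*} (s : Finset κ) (c : ℝ) {f g : κ → Y → ℝ} (hf : ∀ i, BM (f i))
    (hg : ∀ i, BM (g i)) (H : Y × Y → ℝ) (hH : ∀ p, H p = c * ∑ i ∈ s, f i p.1 * g i p.2) :
    Tendsto (fun N : ℕ => (N : ℝ)⁻¹ * ∑ n ∈ range N, ∫ x, H (x, U^[n] x) ∂ν) atTop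
      (nhds (∫ p, H p ∂ρ)) := by
  haveI := h.isProb
  have h1 : ∫ p, H p ∂ρ = c * ∑ i ∈ s, ∫ p, f i p.1 * g i p.2 ∂ρ := by
    simp only [hH]
    rw [integral_const_mul, integral_finsetSum]
    intro i _
    exact ((hf i).tensor (hg i)).integrable ρ
  rw [h1]
  have h2 := (tendsto_finsetSum s fun i _ => h.weak hU (hf i) (hg i)).const_mul c
  refine h2.congr fun N => ?_
  have h3 : ∀ n, ∫ x, H (x, U^[n] x) ∂ν = c * ∑ i ∈ s, ∫ x, f i x * g i (U^[n] x) ∂ν := by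
    intro n
    simp only [hH]
    rw [integral_const_mul, integral_finsetSum]
    intro i _
    exact ((hf i).mul ((hg i).comp (hU.measurable.iterate n))).integrable ν
  simp only [h3]
  rw [← Finset.mul_sum, ← Finset.mul_sum, Finset.sum_comm]
  ring

theorem ind_prod {Z : Type*} (s : Set Y) (t : Set Z) (p : Y × Z) :
    (s ×ˢ t).indicator (fun _ => (1 : ℝ)) p =
      s.indicator (fun _ => (1 : ℝ)) p.1 * t.indicator (fun _ => (1 : ℝ)) p.2 := by
  by_cases h1 : p.1 ∈ s <;> by_cases h2 : p.2 ∈ t <;> simp [Set.indicator, h1, h2]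

theorem ext_of_ind {ρ ρ' : Measure Y} [IsProbabilityMeasure ρ] [IsProbabilityMeasure ρ']
    {s : Set Y} (hs : MeasurableSet s) (h : ∫ p, s.indicator (fun _ => (1 : ℝ)) p ∂ρ =
    ∫ p, s.indicator (fun _ => (1 : ℝ)) p ∂ρ') : ρ s = ρ' s := by
  have e : ∀ r : Measure Y, ∫ p, s.indicator (fun _ => (1 : ℝ)) p ∂r = r.real s := by
    intro r
    exact integral_indicator_one hs
  rw [e, e] at h
  exact (measureReal_eq_measureReal_iff).1 h

theorem ext2 {ρ ρ' : Measure (Y × Y)} [IsProbabilityMeasure ρ] [IsProbabilityMeasure ρ']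
    (h : ∀ f g : Y → ℝ, BM f → BM g → ∫ p, f p.1 * g p.2 ∂ρ = ∫ p, f p.1 * g p.2 ∂ρ') :
    ρ = ρ' := by
  refine ext_of_generate_finite _ generateFrom_prod.symm isPiSystem_prod ?_ (by simp)
  rintro _ ⟨s, hs, t, ht, rfl⟩
  apply ext_of_ind (MeasurableSet.prod hs ht)
  simp only [ind_prod]
  exact h _ _ (BM.indicator hs) (BM.indicator ht)

theorem ext4 {ρ ρ' : Measure ((Y × Y) × (Y × Y))} [IsProbabilityMeasure ρ]
    [IsProbabilityMeasure ρ']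
    (h : ∀ a b c d : Y → ℝ, BM a → BM b → BM c → BM d →
      ∫ p, (a p.1.1 * b p.1.2) * (c p.2.1 * d p.2.2) ∂ρ =
      ∫ p, (a p.1.1 * b p.1.2) * (c p.2.1 * d p.2.2) ∂ρ') :
    ρ = ρ' := by
  have hsp : IsCountablySpanning (Set.image2 (fun (s t : Set Y) => s ×ˢ t)
      {s | MeasurableSet s} {t | MeasurableSet t}) :=
    isCountablySpanning_measurableSet.prod isCountablySpanning_measurableSet
  refine ext_of_generate_finite _
    (generateFrom_eq_prod generateFrom_prod generateFrom_prod hsp hsp).symm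
    (isPiSystem_prod.prod isPiSystem_prod) ?_ (by simp)
  rintro _ ⟨_, ⟨s, hs, t, ht, rfl⟩, _, ⟨u, hu, v, hv, rfl⟩, rfl⟩
  apply ext_of_ind ((MeasurableSet.prod hs ht).prod (MeasurableSet.prod hu hv))
  simp only [ind_prod]
  exact h _ _ _ _ (BM.indicator hs) (BM.indicator ht) (BM.indicator hu) (BM.indicator hv)

theorem IsSq.mp {ν : Measure Y} [IsProbabilityMeasure ν] {U V : Y → Y}
    (hU : MeasurePreserving U ν ν) (hV : MeasurePreserving V ν ν)
    (hc : ∀ x, U (V x) = V (U x)) {ρ : Measure (Y × Y)}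
    (h : IsSq ν U ρ) : MeasurePreserving (dbl V) ρ ρ := by
  haveI := h.isProb
  have hm : Measurable (dbl V) :=
    (hV.measurable.comp measurable_fst).prodMk (hV.measurable.comp measurable_snd)
  refine ⟨hm, ?_⟩
  haveI : IsProbabilityMeasure (ρ.map (dbl V)) := Measure.isProbabilityMeasure_map hm.aemeasurable
  apply ext2
  intro f g hf hg
  rw [integral_map hm.aemeasurable (hf.tensor hg).1.aestronglyMeasurable]
  have h1 := h.weak hU (hf.comp hV.measurable) (hg.comp hV.measurable)
  refine tendsto_nhds_unique h1 ((h.weak hU hf hg).congr fun N => ?_)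
  congr 1
  refine Finset.sum_congr rfl fun n _ => ?_
  have hcn : ∀ x, V (U^[n] x) = U^[n] (V x) := fun x =>
    ((Function.Commute.iterate_left (f := U) (g := V) hc n) x).symm
  simp only [hcn]
  conv_lhs => rw [← hV.map_eq]
  rw [integral_map hV.measurable.aemeasurable]
  exact (hf.mul (hg.comp (hU.measurable.iterate n))).1.aestronglyMeasurable

section Q
theorem ineq {ν : Measure Y} [IsProbabilityMeasure ν] {T S : Y → Y}
  (hT : MeasurePreserving T ν ν) (hS : MeasurePreserving S ν ν) (hc : ∀ x, T (S x) = S (T x))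
  {ρT ρS : Measure (Y × Y)} (hρT : IsSq ν T ρT) (hρS : IsSq ν S ρS)
  {l l' : Measure ((Y × Y) × (Y × Y))} (hl : IsSq ρS (dbl T) l) (hl' : IsSq ρT (dbl S) l')
    {u v : Fin 2 → Y → ℝ} (hu : ∀ i, BM (u i)) (hv : ∀ i, BM (v i)) :
    ∑ i, ∑ i', ∫ p, (u i p.1.1 * u i' p.1.2) * (v i p.2.1 * v i' p.2.2) ∂l' ≤
    ∑ i, ∑ i', ∫ p, (u i p.1.1 * v i p.1.2) * (u i' p.2.1 * v i' p.2.2) ∂l := by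
  haveI := hρT.isProb
  haveI := hρS.isProb
  haveI := hl.isProb
  haveI := hl'.isProb
  have hTT : MeasurePreserving (dbl T) ρS ρS := hρS.mp hS hT fun x => (hc x).symm
  have hSS : MeasurePreserving (dbl S) ρT ρT := hρT.mp hT hS hc
  let F : Y × Y → ℝ := fun p => ∑ i, u i p.1 * v i p.2
  have hF : BM F := BM.sum _ fun i _ => (hu i).tensor (hv i)
  have hR : ∑ i, ∑ i', ∫ p, (u i p.1.1 * v i p.1.2) * (u i' p.2.1 * v i' p.2.2) ∂l =
      ∫ p, F p.1 * F p.2 ∂l := by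
    simp only [F, Finset.sum_mul_sum]
    rw [integral_finsetSum]
    · refine Finset.sum_congr rfl fun i _ => ?_
      rw [integral_finsetSum]
      intro i' _
      exact (((hu i).tensor (hv i)).tensor ((hu i').tensor (hv i'))).integrable l
    · intro i _
      exact (BM.sum _ fun i' _ =>
        (((hu i).tensor (hv i)).tensor ((hu i').tensor (hv i')))).integrable l
  rw [hR, hl.eq hF hF]
  refine ge_of_tendsto (me_sq ρS hTT hF) ((eventually_ne_atTop 0).mono fun N hN => ?_)
  -- average along S
  let Fm : ℕ → Y → ℝ := fun m y => F (y, S^[m] y)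
  have hFm : ∀ m, BM (Fm m) := fun m =>
    hF.comp (measurable_id.prodMk (hS.measurable.iterate m))
  have hlow : Tendsto (fun M : ℕ => (M : ℝ)⁻¹ * ∑ m ∈ range M, ∫ p, Fm m p.1 * Fm m p.2 ∂ρT) atTop
      (nhds (∑ i, ∑ i', ∫ p, (u i p.1.1 * u i' p.1.2) * (v i p.2.1 * v i' p.2.2) ∂l')) := by
    have h1 := tendsto_finsetSum (univ : Finset (Fin 2)) fun i _ =>
      tendsto_finsetSum (univ : Finset (Fin 2)) fun i' _ =>
        hl'.weak hSS ((hu i).tensor (hu i')) ((hv i).tensor (hv i'))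
    refine h1.congr fun M => ?_
    simp only [← Finset.mul_sum]
    congr 1
    have h2 : ∀ m, ∫ p, Fm m p.1 * Fm m p.2 ∂ρT = ∑ i, ∑ i', ∫ x, u i x.1 * u i' x.2 *
        (v i ((dbl S)^[m] x).1 * v i' ((dbl S)^[m] x).2) ∂ρT := by
      intro m
      have hb : ∀ i i', BM (fun x : Y × Y => u i x.1 * u i' x.2 *
        (v i ((dbl S)^[m] x).1 * v i' ((dbl S)^[m] x).2)) := fun i i' =>
        ((hu i).tensor (hu i')).mul (((hv i).tensor (hv i')).comp (hSS.measurable.iterate m))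
      have h3 : ∀ p : Y × Y, Fm m p.1 * Fm m p.2 = ∑ i, ∑ i', u i p.1 * u i' p.2 *
        (v i ((dbl S)^[m] p).1 * v i' ((dbl S)^[m] p).2) := by
        intro p
        simp only [Fm, F, Finset.sum_mul_sum, dbl_iter]
        refine Finset.sum_congr rfl fun i _ => Finset.sum_congr rfl fun i' _ => by ring
      simp only [h3]
      rw [integral_finsetSum]
      · refine Finset.sum_congr rfl fun i _ => ?_
        rw [integral_finsetSum]
        intro i' _
        exact (hb i i').integrable ρT
      · intro i _
        exact (BM.sum _ fun i' _ => hb i i').integrable ρT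
    simp only [h2]
    rw [Finset.sum_comm' (t' := univ) (s' := fun _ => range M) (by simp)]
    refine Finset.sum_congr rfl fun i _ => ?_
    rw [Finset.sum_comm]
  have hhigh : Tendsto (fun M : ℕ => (M : ℝ)⁻¹ * ∑ m ∈ range M,
      ∫ y, av T (Fm m) N y * av T (Fm m) N y ∂ν) atTop
      (nhds (∫ p, av (dbl T) F N p * av (dbl T) F N p ∂ρS)) := by
    have h1 := hρS.weak_sum hS
      ((range N ×ˢ (univ : Finset (Fin 2))) ×ˢ (range N ×ˢ (univ : Finset (Fin 2))))
      ((N : ℝ)⁻¹ * (N : ℝ)⁻¹)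
      (f := fun q y => u q.1.2 (T^[q.1.1] y) * u q.2.2 (T^[q.2.1] y))
      (g := fun q y => v q.1.2 (T^[q.1.1] y) * v q.2.2 (T^[q.2.1] y))
      (fun q => ((hu _).comp (hT.measurable.iterate _)).mul
        ((hu _).comp (hT.measurable.iterate _)))
      (fun q => ((hv _).comp (hT.measurable.iterate _)).mul
        ((hv _).comp (hT.measurable.iterate _)))
      (fun p => av (dbl T) F N p * av (dbl T) F N p)
      (by
        intro p
        have e : av (dbl T) F N p = (N : ℝ)⁻¹ * ∑ q ∈ range N ×ˢ (univ : Finset (Fin 2)),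
            u q.2 (T^[q.1] p.1) * v q.2 (T^[q.1] p.2) := by
          simp only [av, F, dbl_iter]
          rw [Finset.sum_product]
        rw [e, mul_mul_mul_comm, Finset.sum_mul_sum, ← Finset.sum_product']
        congr 1
        refine Finset.sum_congr rfl fun q _ => by ring)
    refine h1.congr fun M => ?_
    congr 1
    refine Finset.sum_congr rfl fun m _ => ?_
    have e : ∀ y, av (dbl T) F N (y, S^[m] y) = av T (Fm m) N y := by
      intro y
      simp only [av, Fm, dbl_iter]
      congr 1
      refine Finset.sum_congr rfl fun n _ => ?_
      have : T^[n] (S^[m] y) = S^[m] (T^[n] y) :=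
        Function.Commute.iterate_iterate (f := T) (g := S) hc n m y
      rw [this]
    simp only [e]
  refine le_of_tendsto_of_tendsto' hlow hhigh fun M => ?_
  refine mul_le_mul_of_nonneg_left (Finset.sum_le_sum fun m _ => ?_) (by positivity)
  rw [hρT.eq (hFm m) (hFm m)]
  exact sq_le ν hT (hFm m) hN

end Q

theorem IsSq.symm {ν : Measure Y} {U : Y → Y} {ρ : Measure (Y × Y)} (h : IsSq ν U ρ)
    {f g : Y → ℝ} (hf : BM f) (hg : BM g) : ∫ p, f p.1 * g p.2 ∂ρ = ∫ p, g p.1 * f p.2 ∂ρ := by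
  rw [h.eq hf hg, h.eq hg hf]
  simp only [mul_comm]

theorem IsSq.swap {ν : Measure Y} [IsProbabilityMeasure ν] {U : Y → Y} {ρ : Measure (Y × Y)}
    (h : IsSq ν U ρ) : MeasurePreserving (Prod.swap : Y × Y → Y × Y) ρ ρ := by
  haveI := h.isProb
  refine ⟨measurable_swap, ?_⟩
  haveI : IsProbabilityMeasure (ρ.map (Prod.swap : Y × Y → Y × Y)) :=
    Measure.isProbabilityMeasure_map measurable_swap.aemeasurable
  apply ext2
  intro f g hf hg
  rw [integral_map measurable_swap.aemeasurable (hf.tensor hg).1.aestronglyMeasurable,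
    h.symm hf hg]
  congr 1; ext p; simp [mul_comm]

theorem IsSq.inner_swap {ν : Measure Y} [IsProbabilityMeasure ν] {U V : Y → Y}
    {ρ : Measure (Y × Y)} (h : IsSq ν U ρ) (hV : MeasurePreserving (dbl V) ρ ρ)
    {l : Measure ((Y × Y) × (Y × Y))} (hl : IsSq ρ (dbl V) l)
    {a b c d : Y → ℝ} (ha : BM a) (hb : BM b) (hc : BM c) (hd : BM d) :
    ∫ p, (a p.1.1 * b p.1.2) * (c p.2.1 * d p.2.2) ∂l =
      ∫ p, (b p.1.1 * a p.1.2) * (d p.2.1 * c p.2.2) ∂l := by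
  haveI := h.isProb
  have hm : MeasurePreserving (dbl Prod.swap) l l := hl.mp hV h.swap fun x => rfl
  conv_lhs => rw [← hm.map_eq]
  rw [integral_map hm.measurable.aemeasurable
    ((ha.tensor hb).tensor (hc.tensor hd)).1.aestronglyMeasurable]
  congr 1; ext p
  simp only [dbl, Prod.swap]
  ring

theorem flip_eq {ν : Measure Y} [IsProbabilityMeasure ν] {T S : Y → Y}
    (hT : MeasurePreserving T ν ν) (hS : MeasurePreserving S ν ν) (hc : ∀ x, T (S x) = S (T x))
    {ρT ρS : Measure (Y × Y)} (hρT : IsSq ν T ρT) (hρS : IsSq ν S ρS)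
    {l l' : Measure ((Y × Y) × (Y × Y))} (hl : IsSq ρS (dbl T) l) (hl' : IsSq ρT (dbl S) l')
    {a b c d : Y → ℝ} (ha : BM a) (hb : BM b) (hcc : BM c) (hd : BM d) :
    ∫ p, (a p.1.1 * c p.1.2) * (b p.2.1 * d p.2.2) ∂l =
      ∫ p, (a p.1.1 * b p.1.2) * (c p.2.1 * d p.2.2) ∂l' := by
  haveI := hρT.isProb
  haveI := hρS.isProb
  have hTT : MeasurePreserving (dbl T) ρS ρS := hρS.mp hS hT fun x => (hc x).symm
  have hSS : MeasurePreserving (dbl S) ρT ρT := hρT.mp hT hS hc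
  obtain ⟨D, hD⟩ : ∃ D : (Y → ℝ) → (Y → ℝ) → (Y → ℝ) → (Y → ℝ) → ℝ, ∀ a b c d, D a b c d =
    ∫ p, (a p.1.1 * c p.1.2) * (b p.2.1 * d p.2.2) ∂l -
      ∫ p, (a p.1.1 * b p.1.2) * (c p.2.1 * d p.2.2) ∂l' := ⟨_, fun _ _ _ _ => rfl⟩
  have s1 : ∀ {a b c d : Y → ℝ}, BM a → BM b → BM c → BM d → D a b c d = D b a d c := by
    intro a b c d ha hb hc hd
    rw [hD, hD, hρT.inner_swap hSS hl' ha hb hc hd, hl.symm (ha.tensor hc) (hb.tensor hd)]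
  have s2 : ∀ {a b c d : Y → ℝ}, BM a → BM b → BM c → BM d → D a b c d = D c d a b := by
    intro a b c d ha hb hc hd
    rw [hD, hD, hρS.inner_swap hTT hl ha hc hb hd, hl'.symm (ha.tensor hb) (hc.tensor hd)]
  have Q : ∀ f : Fin 2 → Fin 2 → Y → ℝ, (∀ i j, BM (f i j)) →
      ∑ j, ∑ j', ∑ i, ∑ i', D (f i j) (f i' j) (f i j') (f i' j') = 0 := by
    intro f hf
    apply le_antisymm
    · have : ∑ j, ∑ j', ∑ i, ∑ i', D (f i j) (f i' j) (f i j') (f i' j') =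
          ∑ i, ∑ i', ∑ j, ∑ j', D (f i j) (f i' j) (f i j') (f i' j') := by
        simp only [Fin.sum_univ_two]; ring
      rw [this]
      refine Finset.sum_nonpos fun i _ => Finset.sum_nonpos fun i' _ => ?_
      have := ineq hS hT (fun x => (hc x).symm) hρS hρT hl' hl (hf i) (hf i')
      simp only [hD, Finset.sum_sub_distrib]
      linarith
    · refine Finset.sum_nonneg fun j _ => Finset.sum_nonneg fun j' _ => ?_
      have := ineq hT hS hc hρT hρS hl hl' (u := fun i => f i j) (v := fun i => f i j')
        (fun i => hf i j) (fun i => hf i j')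
      simp only [hD, Finset.sum_sub_distrib]
      linarith
  have Q' : ∀ a b c d : Y → ℝ, BM a → BM b → BM c → BM d →
      ∑ j, ∑ j', ∑ i, ∑ i', D (![![a, c], ![b, d]] i j) (![![a, c], ![b, d]] i' j)
        (![![a, c], ![b, d]] i j') (![![a, c], ![b, d]] i' j') = 0 := by
    intro a b c d ha hb hc hd
    apply Q
    intro i j
    fin_cases i <;> fin_cases j <;> simpa
  have z1 : ∀ f, BM f → D f f f f = 0 := by
    intro f hf
    have := Q' f f f f hf hf hf hf
    simp only [Fin.sum_univ_two, Matrix.cons_val_zero, Matrix.cons_val_one] at this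
    linarith
  have z2 : ∀ f g, BM f → BM g → D f g f g = 0 := by
    intro f g hf hg
    have := Q' f g f g hf hg hf hg
    simp only [Fin.sum_univ_two, Matrix.cons_val_zero, Matrix.cons_val_one] at this
    linarith [z1 f hf, z1 g hg, s1 hf hg hf hg]
  have z3 : ∀ f g, BM f → BM g → D f f g g = 0 := by
    intro f g hf hg
    have := Q' f f g g hf hf hg hg
    simp only [Fin.sum_univ_two, Matrix.cons_val_zero, Matrix.cons_val_one] at this
    linarith [z1 f hf, z1 g hg, s2 hf hf hg hg]
  have fin : D a b c d = 0 := by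
    have := Q' a b c d ha hb hcc hd
    simp only [Fin.sum_univ_two, Matrix.cons_val_zero, Matrix.cons_val_one] at this
    linarith [z1 a ha, z1 b hb, z1 c hcc, z1 d hd, z2 a b ha hb, z2 b a hb ha, z2 c d hcc hd,
      z2 d c hd hcc, z3 a c ha hcc, z3 c a hcc ha, z3 b d hb hd, z3 d b hd hb,
      s1 ha hb hcc hd, s2 ha hb hcc hd, s2 hb ha hd hcc]
  rw [hD] at fin
  linarith

/-- The key step. -/
theorem step {ν : Measure Y} [IsProbabilityMeasure ν] {T S : Y → Y}
    (hT : MeasurePreserving T ν ν) (hS : MeasurePreserving S ν ν) (hc : ∀ x, T (S x) = S (T x))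
    {ρ : Measure (Y × Y)} (hρT : IsSq ν T ρ) (hρS : IsSq ν S ρ)
    {l l' : Measure ((Y × Y) × (Y × Y))} (hl : IsSq ρ (dbl T) l) (hl' : IsSq ρ (dbl S) l') :
    l = l' := by
  haveI := hρT.isProb
  haveI := hl.isProb
  haveI := hl'.isProb
  apply ext4
  intro a b c d ha hb hcc hd
  rw [← flip_eq hT hS hc hρT hρS hl hl' ha hb hcc hd,
    flip_eq hT hT (fun _ => rfl) hρT hρT hl hl ha hb hcc hd]

theorem erg_condExp {ν : Measure Y} [IsProbabilityMeasure ν] {T : Y → Y} (hT : Ergodic T ν)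
    {f : Y → ℝ} (hf : BM f) : ν[f | invSigma T] =ᵐ[ν] fun _ => ∫ x, f x ∂ν := by
  have hsm : StronglyMeasurable[invSigma T] (ν[f | invSigma T]) := stronglyMeasurable_condExp
  obtain ⟨c, hcc⟩ := hT.ae_eq_const_of_ae_eq_comp_ae (g := ν[f | invSigma T])
    integrable_condExp.aestronglyMeasurable (Eventually.of_forall fun x => inv_of_sm hsm x)
  have h1 := integral_condExp (μ := ν) (f := f) (invSigma_le T)
  rw [integral_congr_ae hcc] at h1
  simp at h1
  rw [← h1]
  exact hcc

theorem base {ν : Measure Y} [IsProbabilityMeasure ν] {T S : Y → Y} (hT : Ergodic T ν)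
    (hS : Ergodic S ν) {ρ ρ' : Measure (Y × Y)} (hρ : IsSq ν T ρ) (hρ' : IsSq ν S ρ') :
    ρ = ρ' := by
  haveI := hρ.isProb
  haveI := hρ'.isProb
  apply ext2
  intro f g hf hg
  rw [hρ.eq hf hg, hρ'.eq hf hg]
  apply integral_congr_ae
  filter_upwards [erg_condExp hT hf, erg_condExp hT hg, erg_condExp hS hf, erg_condExp hS hg]
    with x h1 h2 h3 h4
  rw [h1, h2, h3, h4]

theorem map_comm {X : Type*} {T S : X → X} (h : ∀ x, T (S x) = S (T x)) (k : ℕ) :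
    ∀ x, HKBox.map T k (HKBox.map S k x) = HKBox.map S k (HKBox.map T k x) := by
  induction k with
  | zero => exact h
  | succ k ih => exact fun x => Prod.ext (ih x.1) (ih x.2)

end HKaux

/-- For commuting invertible ergodic measure preserving transformations `T` and `S` of a
probability space, the Host–Kra box measures agree: `μ^{[k]}_T = μ^{[k]}_S` for all `k`. -/
theorem box_measures_eq_of_commuting {X : Type*} [MeasurableSpace X]
    (μ : Measure X) [IsProbabilityMeasure μ]
    (T S T' S' : X → X) (hT' : Measurable T') (hS' : Measurable S')
    (hTinv : Function.LeftInverse T' T ∧ Function.RightInverse T' T)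
    (hSinv : Function.LeftInverse S' S ∧ Function.RightInverse S' S)
    (hcomm : T ∘ S = S ∘ T)
    (hergT : Ergodic T μ) (hergS : Ergodic S μ)
    (νT νS : ∀ k, Measure (HKBox X k))
    (hνT : IsHKSeq μ T νT) (hνS : IsHKSeq μ S νS) :
    ∀ k, νT k = νS k := by
  have hc : ∀ x, T (S x) = S (T x) := fun x => congrFun hcomm x
  have hsT : ∀ k, HKaux.IsSq (νT k) (HKBox.map T k) (νT (k + 1)) := hνT.2
  have hsS : ∀ k, HKaux.IsSq (νS k) (HKBox.map S k) (νS (k + 1)) := hνS.2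
  have key : ∀ k, νT k = νS k ∧ IsProbabilityMeasure (νT k) ∧
      MeasurePreserving (HKBox.map T k) (νT k) (νT k) ∧
      MeasurePreserving (HKBox.map S k) (νT k) (νT k) ∧ νT (k + 1) = νS (k + 1) := by
    intro k
    induction k with
    | zero =>
      have e1 : νT 0 = μ := hνT.1
      have e2 : νS 0 = μ := hνS.1
      have h1 := hsT 0
      have h2 := hsS 0
      rw [e1] at h1
      rw [e2] at h2
      refine ⟨e1.trans e2.symm, ?_, ?_, ?_, ?_⟩
      · rw [e1]; assumption
      · rw [e1]; exact hergT.toMeasurePreserving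
      · rw [e1]; exact hergS.toMeasurePreserving
      · exact HKaux.base (Y := X) hergT hergS h1 h2
    | succ k ih =>
      obtain ⟨e1, hp, hT, hS, e2⟩ := ih
      have h1 := hsT k
      have h2 := hsS k
      rw [← e1, ← e2] at h2
      have h3 := hsT (k + 1)
      have h4 := hsS (k + 1)
      rw [← e2] at h4
      exact ⟨e2, h1.isProb, h1.mp hT hT (fun _ => rfl), h1.mp hT hS (HKaux.map_comm hc k),
        HKaux.step (Y := HKBox X k) hT hS (HKaux.map_comm hc k) h1 h2 h3 h4⟩
  exact fun k => (key k).1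
end

section
/- Let $T$ and $S$ be commuting invertible ergodic measure preserving transformations of a probability space $(X,\mathcal{X},\mu)$. Then for every $k\geq 1$ and every $f\in L^\infty(\mu)$, the Host–Kra seminorms agree: $\nnorm{f}_{k,T} = \nnorm{f}_{k,S}$. -/
open MeasureTheory Filter Finset

section Aux

variable {α : Type*} [MeasurableSpace α]

/-- relatively independent square -/
def RelSq (l : Measure α) (T : α → α) (ν : Measure (α × α)) : Prop :=
  ∀ F' F'' : α → ℝ, Measurable F' → Measurable F'' →
    (∃ C, ∀ x, |F' x| ≤ C) → (∃ C, ∀ x, |F'' x| ≤ C) →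
    ∫ p, F' p.1 * F'' p.2 ∂ν = ∫ x, (l[F' | invSigma T]) x * (l[F'' | invSigma T]) x ∂l

/-- sets a.e. invariant -/
def aeInv (l : Measure α) (T : α → α) : MeasurableSpace α where
  MeasurableSet' s := MeasurableSet s ∧ T ⁻¹' s =ᵐ[l] s
  measurableSet_empty := ⟨MeasurableSet.empty, by simp⟩
  measurableSet_compl := fun s hs => ⟨hs.1.compl, by
    rw [Set.preimage_compl]; exact hs.2.compl⟩
  measurableSet_iUnion := fun s hs => ⟨MeasurableSet.iUnion fun i => (hs i).1, by
    rw [Set.preimage_iUnion]; exact Filter.EventuallyEq.countable_iUnion fun i => (hs i).2⟩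

/-- `R` acts trivially on the `T`-invariant sets -/
def Triv (l : Measure α) (T R : α → α) : Prop :=
  ∀ s, MeasurableSet s → T ⁻¹' s =ᵐ[l] s → R ⁻¹' s =ᵐ[l] s

lemma aeInv_le (l : Measure α) (T : α → α) : aeInv l T ≤ ‹MeasurableSpace α› := fun _ h => h.1
lemma invSigma_le (T : α → α) : invSigma T ≤ ‹MeasurableSpace α› := fun _ h => h.1
lemma invSigma_le_aeInv (l : Measure α) (T : α → α) : invSigma T ≤ aeInv l T :=
  fun s h => ⟨h.1, by rw [h.2]; exact EventuallyEq.rfl⟩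

lemma condExp_aeInv {l : Measure α} [IsProbabilityMeasure l] {T : α → α}
    (hT : MeasurePreserving T l l) {F : α → ℝ} (hF : Integrable F l) :
    l[F | invSigma T] =ᵐ[l] l[F | aeInv l T] := by
  refine ae_eq_condExp_of_forall_setIntegral_eq (aeInv_le l T) hF
    (fun _ _ _ => integrable_condExp.integrableOn) ?_ ?_
  · intro s hs _
    obtain ⟨t, ht, hts, htT⟩ := hT.quasiMeasurePreserving.exists_preimage_eq_of_preimage_ae
      hs.1.nullMeasurableSet hs.2
    rw [← setIntegral_congr_set hts, ← setIntegral_congr_set hts]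
    exact setIntegral_condExp (invSigma_le T) hF ⟨ht, htT⟩
  · exact (stronglyMeasurable_condExp.mono (invSigma_le_aeInv l T)).aestronglyMeasurable

lemma condExp_comp_triv {l : Measure α} [IsProbabilityMeasure l] {T : α → α} {R : α ≃ᵐ α}
    (hR : MeasurePreserving R l l) (h : Triv l T R) {F : α → ℝ} (hF : Integrable F l) :
    l[F ∘ R | aeInv l T] =ᵐ[l] l[F | aeInv l T] := by
  symm
  refine ae_eq_condExp_of_forall_setIntegral_eq (aeInv_le l T) (hR.integrable_comp_of_integrable hF)
    (fun _ _ _ => integrable_condExp.integrableOn) ?_ 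
    stronglyMeasurable_condExp.aestronglyMeasurable
  intro s hs _
  rw [setIntegral_condExp (aeInv_le l T) hF hs,
    ← setIntegral_congr_set (f := F ∘ R) (h s hs.1 hs.2)]
  exact (hR.setIntegral_preimage_emb R.measurableEmbedding F s).symm

/-- indicator -/
noncomputable def ind (s : Set α) : α → ℝ := s.indicator 1

lemma integrable_ind {l : Measure α} [IsFiniteMeasure l] {s : Set α} (hs : MeasurableSet s) :
    Integrable (ind s) l := (integrable_const (1:ℝ)).indicator hs

lemma rect {l : Measure α} [IsProbabilityMeasure l] {T : α → α}
    (hT : MeasurePreserving T l l) {ν : Measure (α × α)} (hν : RelSq l T ν) {A B : Set α}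
    (hA : MeasurableSet A) (hB : MeasurableSet B) :
    ν.real (A ×ˢ B) = ∫ x, (l[ind A | aeInv l T]) x * (l[ind B | aeInv l T]) x ∂l := by
  have key : ∀ s : Set α, MeasurableSet s → Measurable (ind s) ∧ ∃ C, ∀ x, |ind s x| ≤ C := by
    intro s hs
    refine ⟨measurable_const.indicator hs, 1, fun x => ?_⟩
    by_cases hx : x ∈ s <;> simp [ind, hx]
  have h := hν (ind A) (ind B) (key A hA).1 (key B hB).1 (key A hA).2 (key B hB).2
  have h1 : ∫ p, ind A p.1 * ind B p.2 ∂ν = ν.real (A ×ˢ B) := by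
    rw [← integral_indicator_one (hA.prod hB)]
    congr 1
    ext p
    by_cases h1 : p.1 ∈ A <;> by_cases h2 : p.2 ∈ B <;> simp [ind, h1, h2, Set.indicator]
  rw [← h1, h]
  refine integral_congr_ae ?_
  filter_upwards [condExp_aeInv hT (integrable_ind hA), condExp_aeInv hT (integrable_ind hB)]
    with x h1 h2
  rw [h1, h2]

lemma condExp_ind_univ {l : Measure α} [IsProbabilityMeasure l] {T : α → α} :
    l[ind (Set.univ : Set α) | aeInv l T] = fun _ => 1 := by
  have : ind (Set.univ : Set α) = fun _ => 1 := by ext x; simp [ind]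
  rw [this]; exact condExp_const (aeInv_le l T) _

lemma relSq_prob {l : Measure α} [IsProbabilityMeasure l] {T : α → α}
    (hT : MeasurePreserving T l l) {ν : Measure (α × α)} (hν : RelSq l T ν) :
    IsProbabilityMeasure ν := by
  have h := rect hT hν MeasurableSet.univ MeasurableSet.univ
  rw [condExp_ind_univ] at h
  simp only [Set.univ_prod_univ, mul_one, integral_const, probReal_univ, smul_eq_mul] at h
  refine ⟨?_⟩
  rw [Measure.real, ENNReal.toReal_eq_one_iff] at h
  exact h

lemma ext_rect {ν ν' : Measure (α × α)} [IsFiniteMeasure ν] [IsFiniteMeasure ν']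
    (h : ∀ A B, MeasurableSet A → MeasurableSet B → ν.real (A ×ˢ B) = ν'.real (A ×ˢ B)) :
    ν = ν' := by
  refine Measure.ext_prod fun {s t} hs ht => ?_
  have := h s t hs ht
  rwa [measureReal_eq_measureReal_iff] at this

lemma mp_fst {l : Measure α} [IsProbabilityMeasure l] {T : α → α}
    (hT : MeasurePreserving T l l) {ν : Measure (α × α)} (hν : RelSq l T ν) :
    MeasurePreserving Prod.fst ν l := by
  have := relSq_prob hT hν
  refine ⟨measurable_fst, ?_⟩
  ext s hs
  rw [Measure.map_apply measurable_fst hs, ← Set.prod_univ]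
  have h := rect hT hν hs MeasurableSet.univ
  rw [condExp_ind_univ] at h
  simp only [mul_one] at h
  rw [integral_condExp (aeInv_le l T), ind, integral_indicator_one hs,
    measureReal_eq_measureReal_iff] at h
  exact h

lemma mp_swap {l : Measure α} [IsProbabilityMeasure l] {T : α → α}
    (hT : MeasurePreserving T l l) {ν : Measure (α × α)} (hν : RelSq l T ν) :
    MeasurePreserving Prod.swap ν ν := by
  have := relSq_prob hT hν
  refine ⟨measurable_swap, ?_⟩
  have : IsFiniteMeasure (ν.map Prod.swap) := by infer_instance
  refine ext_rect fun A B hA hB => ?_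
  rw [map_measureReal_apply measurable_swap (hA.prod hB), Set.preimage_swap_prod,
    rect hT hν hA hB, rect hT hν hB hA]
  simp_rw [mul_comm]

lemma mp_left {l : Measure α} [IsProbabilityMeasure l] {T : α → α} {R : α ≃ᵐ α}
    (hT : MeasurePreserving T l l) {ν : Measure (α × α)} (hν : RelSq l T ν)
    (hR : MeasurePreserving R l l) (h : Triv l T R) :
    MeasurePreserving (Prod.map R id) ν ν := by
  have := relSq_prob hT hν
  have hm : Measurable (Prod.map R id : α × α → α × α) := R.measurable.prodMap measurable_id
  refine ⟨hm, ?_⟩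
  refine ext_rect fun A B hA hB => ?_
  have e : Prod.map R id ⁻¹' (A ×ˢ B) = (R ⁻¹' A) ×ˢ B := by ext; simp
  rw [map_measureReal_apply hm (hA.prod hB), e,
    rect hT hν hA hB, rect hT hν (R.measurable hA) hB]
  refine integral_congr_ae ?_
  filter_upwards [condExp_comp_triv hR h (integrable_ind hA)] with x hx
  rw [← hx]; rfl

lemma mp_right {l : Measure α} [IsProbabilityMeasure l] {T : α → α} {R : α ≃ᵐ α}
    (hT : MeasurePreserving T l l) {ν : Measure (α × α)} (hν : RelSq l T ν)
    (hR : MeasurePreserving R l l) (h : Triv l T R) :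
    MeasurePreserving (Prod.map id R) ν ν :=
  (mp_swap hT hν).comp ((mp_left hT hν hR h).comp (mp_swap hT hν))

lemma prod_ae {l : Measure α} [IsProbabilityMeasure l] {T : α → α}
    (hT : MeasurePreserving T l l) {ν : Measure (α × α)} (hν : RelSq l T ν) {J : Set α}
    (hJ : MeasurableSet J) (hJT : T ⁻¹' J =ᵐ[l] J) :
    (Prod.fst ⁻¹' J : Set (α × α)) =ᵐ[ν] Prod.snd ⁻¹' J := by
  have := relSq_prob hT hν
  have e : ∀ s, MeasurableSet[aeInv l T] s → l[ind s | aeInv l T] = ind s := fun s hs =>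
    condExp_of_stronglyMeasurable (aeInv_le l T)
      (StronglyMeasurable.indicator stronglyMeasurable_const hs) (integrable_ind hs.1)
  have hJ1 : MeasurableSet[aeInv l T] J := ⟨hJ, hJT⟩
  have z1 := rect hT hν hJ hJ.compl
  have z2 := rect hT hν hJ.compl hJ
  rw [e _ hJ1, e _ hJ1.compl] at z1 z2
  have z : ∀ x, ind J x * ind Jᶜ x = 0 := by
    intro x; by_cases hx : x ∈ J <;> simp [ind, hx]
  simp only [z, mul_comm (ind Jᶜ _), integral_zero] at z1 z2
  rw [measureReal_eq_zero_iff] at z1 z2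
  refine (ae_le_set.2 ?_).antisymm (ae_le_set.2 ?_)
  · refine measure_mono_null ?_ z1
    rintro ⟨x, y⟩ h; simpa using h
  · refine measure_mono_null ?_ z2
    rintro ⟨x, y⟩ h; simpa [and_comm] using h

/-- approximation of a set by sets with countably many sections -/
def Approx (ν : Measure (α × α)) (B : Set (α × α)) : Prop :=
  ∀ η : ENNReal, η ≠ 0 → ∃ f : α → ℕ, Measurable f ∧ ∃ Q : ℕ → Set α, (∀ i, MeasurableSet (Q i)) ∧
    ν (symmDiff B {p | p.2 ∈ Q (f p.1)}) ≤ η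

lemma Approx.union {ν : Measure (α × α)} {B C : Set (α × α)} (hB : Approx ν B) (hC : Approx ν C) :
    Approx ν (B ∪ C) := by
  intro η hη
  obtain ⟨f, hf, Q, hQ, h1⟩ := hB (η / 2) (by simpa using hη)
  obtain ⟨g, hg, P, hP, h2⟩ := hC (η / 2) (by simpa using hη)
  refine ⟨fun x => Nat.pair (f x) (g x), ?_, fun i => Q i.unpair.1 ∪ P i.unpair.2,
    fun i => (hQ _).union (hP _), ?_⟩
  · exact (measurable_of_countable (fun p : ℕ × ℕ => Nat.pair p.1 p.2)).comp (hf.prodMk hg)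
  · rw [← ENNReal.add_halves η]
    refine le_trans (le_trans (measure_mono ?_) (measure_union_le _ _)) (add_le_add h1 h2)
    rintro ⟨x, y⟩
    simp only [Set.mem_symmDiff, Set.mem_union, Set.mem_ofPred_eq, Nat.unpair_pair]
    tauto

lemma approx {ν : Measure (α × α)} [IsFiniteMeasure ν] {B : Set (α × α)} (hB : MeasurableSet B) :
    Approx ν B := by
  induction B, hB using MeasurableSpace.induction_on_inter generateFrom_prod.symm isPiSystem_prod with
  | empty =>
    intro η _
    exact ⟨fun _ => 0, measurable_const, fun _ => ∅, fun _ => MeasurableSet.empty, by simp⟩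
  | basic t ht =>
    obtain ⟨A, hA, C, hC, rfl⟩ := ht
    intro η _
    classical
    refine ⟨fun x => if x ∈ A then 0 else 1, Measurable.ite hA measurable_const measurable_const,
      fun i => if i = 0 then C else ∅, fun i => ?_, ?_⟩
    · dsimp only
      split_ifs
      exacts [hC, MeasurableSet.empty]
    · have : {p : α × α | p.2 ∈ (if (if p.1 ∈ A then 0 else 1) = 0 then C else ∅ : Set α)}
          = A ×ˢ C := by
        ext ⟨x, y⟩
        by_cases hx : x ∈ A <;> simp [hx]
      rw [this]; simp
  | compl t ht ih =>
    intro η hη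
    obtain ⟨f, hf, Q, hQ, h⟩ := ih η hη
    refine ⟨f, hf, fun i => (Q i)ᶜ, fun i => (hQ i).compl, ?_⟩
    refine le_trans (measure_mono ?_) h
    rintro ⟨x, y⟩
    simp only [Set.mem_symmDiff, Set.mem_compl_iff, Set.mem_ofPred_eq]
    tauto
  | iUnion s hd hs ih =>
    have fin : ∀ N, Approx ν (⋃ i, ⋃ (_ : i < N), s i) := by
      intro N
      induction N with
      | zero =>
        intro η _
        exact ⟨fun _ => 0, measurable_const, fun _ => ∅, fun _ => MeasurableSet.empty, by simp⟩
      | succ n ihn =>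
        rw [Set.biUnion_lt_succ]
        exact ihn.union (ih n)
    intro η hη
    have ht := tendsto_measure_biUnion_Ici_zero_of_pairwise_disjoint (μ := ν)
      (fun i => (hs i).nullMeasurableSet) hd
    have hη2 : 0 < η / 2 := by simpa [pos_iff_ne_zero] using hη
    obtain ⟨N, hN⟩ := (ht.eventually (gt_mem_nhds hη2)).exists
    obtain ⟨f, hf, Q, hQ, h⟩ := fin N (η / 2) hη2.ne'
    refine ⟨f, hf, Q, hQ, ?_⟩
    rw [← ENNReal.add_halves η]
    refine le_trans (le_trans (measure_mono ?_) (measure_union_le _ _)) (add_le_add hN.le h)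
    intro p hp
    simp only [Set.mem_symmDiff, Set.mem_union, Set.mem_ofPred_eq, Set.mem_iUnion] at hp ⊢
    rcases hp with ⟨⟨i, hi⟩, h2⟩ | ⟨h1, h2⟩
    · by_cases hiN : i < N
      · exact Or.inr (Or.inl ⟨⟨i, hiN, hi⟩, h2⟩)
      · exact Or.inl ⟨i, not_lt.1 hiN, hi⟩
    · refine Or.inr (Or.inr ⟨h1, fun ⟨i, _, hi⟩ => h2 ⟨i, hi⟩⟩)

/-- first marginal of the restriction of `ν` to `W` -/
noncomputable def rho (ν : Measure (α × α)) (W : Set (α × α)) : Measure α :=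
  (ν.restrict W).map Prod.fst

lemma rho_apply (ν : Measure (α × α)) (W : Set (α × α)) {C : Set α} (hC : MeasurableSet C) :
    rho ν W C = ν (Prod.fst ⁻¹' C ∩ W) := by
  rw [rho, Measure.map_apply measurable_fst hC, Measure.restrict_apply (measurable_fst hC)]

instance (ν : Measure (α × α)) [IsFiniteMeasure ν] (W : Set (α × α)) :
    IsFiniteMeasure (rho ν W) := by unfold rho; infer_instance

lemma rho_ac {l : Measure α} {ν : Measure (α × α)} (h : MeasurePreserving Prod.fst ν l)
    (W : Set (α × α)) : rho ν W ≪ l := by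
  refine Measure.AbsolutelyContinuous.mk fun s hs hs0 => ?_
  rw [rho_apply ν W hs]
  refine measure_mono_null Set.inter_subset_left ?_
  rw [h.measure_preimage hs.nullMeasurableSet, hs0]

lemma rho_mp {ν : Measure (α × α)} {T : α → α} (hTm : Measurable T)
    (hTT : MeasurePreserving (Prod.map T T) ν ν) {W : Set (α × α)} (hW : MeasurableSet W)
    (hWT : Prod.map T T ⁻¹' W = W) : MeasurePreserving T (rho ν W) (rho ν W) := by
  refine ⟨hTm, ?_⟩
  ext s hs
  rw [Measure.map_apply hTm hs, rho_apply ν W (hTm hs), rho_apply ν W hs,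
    ← hTT.measure_preimage ((measurable_fst hs).inter hW).nullMeasurableSet,
    Set.preimage_inter, hWT]
  rfl

/-- set-wise bounds coming from bounds on the density -/
lemma rho_le_of_density {l : Measure α} [IsFiniteMeasure l] {ν : Measure (α × α)}
    [IsFiniteMeasure ν] (h : MeasurePreserving Prod.fst ν l) {W : Set (α × α)} {c : ENNReal}
    {A : Set α} (hc : ∀ x ∈ A, (rho ν W).rnDeriv l x ≤ c) :
    rho ν W A ≤ c * l A := by
  rw [← Measure.setLIntegral_rnDeriv (rho_ac h W), ← setLIntegral_const]
  exact setLIntegral_mono measurable_const hc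

lemma density_null {l : Measure α} [IsFiniteMeasure l] {ν : Measure (α × α)}
    [IsFiniteMeasure ν] (h : MeasurePreserving Prod.fst ν l) {W : Set (α × α)} {c : ENNReal}
    (hct : c ≠ ⊤) {A : Set α} (hA : MeasurableSet A)
    (hc : ∀ A' ⊆ A, MeasurableSet A' → rho ν W A' ≤ c * l A') :
    l (A ∩ {x | c < (rho ν W).rnDeriv l x}) = 0 := by
  by_contra h0
  have hm : MeasurableSet (A ∩ {x | c < (rho ν W).rnDeriv l x}) :=
    hA.inter (measurableSet_lt measurable_const (Measure.measurable_rnDeriv _ _))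
  have h1 := hc _ Set.inter_subset_left hm
  rw [← Measure.setLIntegral_rnDeriv (rho_ac h W), ← setLIntegral_const] at h1
  refine absurd h1 (not_le.2 ?_)
  refine setLIntegral_strict_mono hm h0 (Measure.measurable_rnDeriv _ _) ?_ ?_
  · rw [setLIntegral_const]
    finiteness
  · exact Eventually.of_forall fun x hx => hx.2

lemma rho_comp {l : Measure α} {ν : Measure (α × α)} {P : α ≃ᵐ α}
    (hP : MeasurePreserving P l l) (hP1 : MeasurePreserving (Prod.map P id) ν ν)
    {V : Set (α × α)} (hV : MeasurableSet V) {c : ENNReal} {A : Set α}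
    (hc : ∀ A' ⊆ A, MeasurableSet A' → rho ν V A' ≤ c * l A')
    {C : Set α} (hC : MeasurableSet C) (hCA : C ⊆ P ⁻¹' A) :
    ν (Prod.fst ⁻¹' C ∩ Prod.map P id ⁻¹' V) ≤ c * l C := by
  have hD : MeasurableSet (P.symm ⁻¹' C) := P.symm.measurable hC
  have e : C = P ⁻¹' (P.symm ⁻¹' C) := by ext x; simp
  have e2 : Prod.fst ⁻¹' C ∩ Prod.map P id ⁻¹' V
      = Prod.map P id ⁻¹' (Prod.fst ⁻¹' (P.symm ⁻¹' C) ∩ V) := by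
    ext p; simp
  rw [e2, hP1.measure_preimage ((measurable_fst hD).inter hV).nullMeasurableSet,
    ← rho_apply ν V hD]
  conv_rhs => rw [e]
  rw [hP.measure_preimage hD.nullMeasurableSet]
  refine hc _ ?_ hD
  intro x hx
  simpa using hCA hx

lemma exists_return {l : Measure α} [IsFiniteMeasure l] {T R : α → α}
    (hT : MeasurePreserving T l l) (hR : MeasurePreserving R l l) (htr : Triv l T R)
    {A : Set α} (hA : MeasurableSet A) (hA0 : l A ≠ 0) :
    ∃ n, l (R ⁻¹' A ∩ T^[n] ⁻¹' A) ≠ 0 := by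
  by_contra! hcon
  let S := ⋃ n, T^[n] ⁻¹' A
  have hS : MeasurableSet S := MeasurableSet.iUnion fun n => (hT.measurable.iterate n) hA
  have hsub : T ⁻¹' S ⊆ S := by
    intro x hx
    simp only [S, Set.mem_preimage, Set.mem_iUnion] at hx ⊢
    obtain ⟨n, hn⟩ := hx
    exact ⟨n + 1, by rwa [Function.iterate_succ_apply]⟩
  have hST : T ⁻¹' S =ᵐ[l] S := ae_eq_of_subset_of_measure_ge hsub
    (hT.measure_preimage hS.nullMeasurableSet).ge (hT.measurable hS).nullMeasurableSet
    (measure_ne_top _ _)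
  have hSR := htr S hS hST
  have h1 : l (R ⁻¹' A ∩ S) = 0 := by
    simp only [S, Set.inter_iUnion]
    exact measure_iUnion_null hcon
  have hAS : R ⁻¹' A ⊆ R ⁻¹' S := by
    refine Set.preimage_mono ?_
    exact Set.subset_iUnion (fun n => T^[n] ⁻¹' A) 0
  have h2 : l (R ⁻¹' A ∩ R ⁻¹' S) = 0 := by
    rw [← h1]
    exact measure_congr (EventuallyEq.rfl.inter hSR)
  rw [Set.inter_eq_left.2 hAS, hR.measure_preimage hA.nullMeasurableSet] at h2
  exact hA0 h2

lemma iterate_equiv (T : α ≃ᵐ α) (n : ℕ) : ∃ P : α ≃ᵐ α, (P : α → α) = T^[n] := by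
  induction n with
  | zero => exact ⟨MeasurableEquiv.refl α, rfl⟩
  | succ n ih =>
    obtain ⟨P, hP⟩ := ih
    exact ⟨T.trans P, by rw [Function.iterate_succ, ← hP]; rfl⟩

lemma triv_iterate {l : Measure α} {T : α → α} (hT : MeasurePreserving T l l) (n : ℕ) :
    Triv l T T^[n] := by
  intro s _ hs
  induction n with
  | zero => exact EventuallyEq.rfl
  | succ n ih =>
    rw [Function.iterate_succ, Set.preimage_comp]
    exact (hT.quasiMeasurePreserving.preimage_ae_eq ih).trans hs

/-- final inequality -/
lemma rho_W_le {l : Measure α} [IsProbabilityMeasure l] {T R P : α ≃ᵐ α}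
    (hT : MeasurePreserving T l l) (hR : MeasurePreserving R l l) (htr : Triv l T R)
    (hP : MeasurePreserving P l l) (htrP : Triv l T P)
    {ν : Measure (α × α)} (hν : RelSq l T ν) {B : Set (α × α)} (hB : MeasurableSet B)
    (hPB : Prod.map P P ⁻¹' B = B) {J : Set α} (hJ : MeasurableSet J) (hJT : T ⁻¹' J =ᵐ[l] J) :
    rho ν (symmDiff (Prod.map R R ⁻¹' B) B) J ≤
      rho ν (symmDiff (Prod.map R id ⁻¹' B) (Prod.map P id ⁻¹' B)) J +
      rho ν (symmDiff (Prod.map R id ⁻¹' (Prod.swap ⁻¹' B))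
        (Prod.map P id ⁻¹' (Prod.swap ⁻¹' B))) J := by
  have hR1 := mp_left hT hν hR htr
  have hR2 := mp_right hT hν hR htr
  have hP1 := mp_left hT hν hP htrP
  have hsw := mp_swap hT hν
  have hB' : MeasurableSet (Prod.swap ⁻¹' B) := measurable_swap hB
  have hD1 : MeasurableSet (symmDiff (Prod.map R id ⁻¹' B) (Prod.map P id ⁻¹' B)) :=
    (hR1.measurable hB).symmDiff (hP1.measurable hB)
  have hD2 : MeasurableSet (symmDiff (Prod.map R id ⁻¹' (Prod.swap ⁻¹' B))
      (Prod.map P id ⁻¹' (Prod.swap ⁻¹' B))) :=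
    (hR1.measurable hB').symmDiff (hP1.measurable hB')
  have hJ1 : MeasurableSet (Prod.fst ⁻¹' J : Set (α × α)) := measurable_fst hJ
  rw [rho_apply _ _ hJ, rho_apply _ _ hJ, rho_apply _ _ hJ]
  have s1 : (Prod.fst ⁻¹' J ∩ symmDiff (Prod.map R R ⁻¹' B) B) ⊆
      (Prod.map id R ⁻¹' (Prod.fst ⁻¹' J ∩
        symmDiff (Prod.map R id ⁻¹' B) (Prod.map P id ⁻¹' B))) ∪
      (Prod.fst ⁻¹' J ∩ Prod.map P id ⁻¹' (Prod.swap ⁻¹' (symmDiff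
        (Prod.map R id ⁻¹' (Prod.swap ⁻¹' B)) (Prod.map P id ⁻¹' (Prod.swap ⁻¹' B))))) := by
    rintro ⟨x, y⟩ ⟨hx, h⟩
    have hxy : (P x, P y) ∈ B ↔ (x, y) ∈ B := by
      conv_rhs => rw [← hPB]
      rfl
    simp only [Set.mem_preimage, Set.mem_symmDiff, Set.mem_union, Set.mem_inter_iff,
      Prod.map_apply, Prod.swap_prod_mk, id] at hx h ⊢
    tauto
  refine le_trans (le_trans (measure_mono s1) (measure_union_le _ _)) (add_le_add ?_ ?_)
  · exact (hR2.measure_preimage (hJ1.inter hD1).nullMeasurableSet).le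
  · have a1 : (Prod.fst ⁻¹' J : Set (α × α)) =ᵐ[ν] Prod.map P id ⁻¹' (Prod.fst ⁻¹' J) :=
      (mp_fst hT hν).quasiMeasurePreserving.preimage_ae_eq (htrP J hJ hJT).symm
    refine (measure_congr (a1.inter EventuallyEq.rfl)).trans_le ?_
    refine (hP1.measure_preimage (hJ1.inter (measurable_swap hD2)).nullMeasurableSet).trans_le ?_
    refine (measure_congr ((prod_ae hT hν hJ hJT).inter EventuallyEq.rfl)).trans_le ?_
    exact (hsw.measure_preimage (hJ1.inter hD2).nullMeasurableSet).le

lemma prop_aux {x a b q a' b' q' : Prop} (hx : x)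
    (h : (a ∧ ¬ b ∨ b ∧ ¬ a) ∨ (a' ∧ ¬ b' ∨ b' ∧ ¬ a')) :
    (x ∧ ((a ∧ ¬ q ∨ q ∧ ¬ a) ∨ (a' ∧ ¬ q' ∨ q' ∧ ¬ a'))) ∨
    (x ∧ ((b ∧ ¬ q ∨ q ∧ ¬ b) ∨ (b' ∧ ¬ q' ∨ q' ∧ ¬ b'))) := by
  by_cases q <;> by_cases q' <;> simp_all <;> tauto

set_option maxHeartbeats 1000000 in
theorem step {l : Measure α} [IsProbabilityMeasure l] {T R : α ≃ᵐ α}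
    (hT : MeasurePreserving T l l) (hR : MeasurePreserving R l l)
    (hc : ∀ x, T (R x) = R (T x)) (htr : Triv l T R)
    {ν : Measure (α × α)} (hν : RelSq l T ν) :
    MeasurePreserving (Prod.map T T) ν ν ∧ MeasurePreserving (Prod.map R R) ν ν ∧
    Triv ν (Prod.map T T) (Prod.map R R) := by
  have hprob := relSq_prob hT hν
  have hfst := mp_fst hT hν
  have hsw := mp_swap hT hν
  have hR1 := mp_left hT hν hR htr
  have hTT : MeasurePreserving (Prod.map T T) ν ν :=
    (mp_left hT hν hT (fun _ _ h => h)).comp (mp_right hT hν hT (fun _ _ h => h))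
  have hRR : MeasurePreserving (Prod.map R R) ν ν :=
    (mp_left hT hν hR htr).comp (mp_right hT hν hR htr)
  refine ⟨hTT, hRR, ?_⟩
  -- reduce to strictly invariant sets
  suffices H : ∀ B, MeasurableSet B → Prod.map T T ⁻¹' B = B → Prod.map R R ⁻¹' B =ᵐ[ν] B by
    intro s hs hsT
    obtain ⟨t, ht, hts, htT⟩ := hTT.quasiMeasurePreserving.exists_preimage_eq_of_preimage_ae
      hs.nullMeasurableSet hsT
    exact (hRR.quasiMeasurePreserving.preimage_ae_eq hts.symm).trans ((H t ht htT).trans hts)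
  intro B hB hBT
  have hBT' : ∀ x y, (T x, T y) ∈ B ↔ (x, y) ∈ B := fun x y => by
    conv_rhs => rw [← hBT]
    rfl
  by_contra hne
  set W := symmDiff (Prod.map R R ⁻¹' B) B with hWdef
  have hW : MeasurableSet W := (hRR.measurable hB).symmDiff hB
  have hWT : Prod.map T T ⁻¹' W = W := by
    ext ⟨x, y⟩
    simp only [hWdef, Set.mem_preimage, Set.mem_symmDiff, Prod.map_apply, ← hc, hBT']
  have hW0 : ν W ≠ 0 := fun h => hne (measure_symmDiff_eq_zero_iff.1 h)
  set w := (rho ν W).rnDeriv l with hw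
  have hwm : Measurable w := Measure.measurable_rnDeriv _ _
  have hwT : w ∘ T =ᵐ[l] w := (rho_mp T.measurable hTT hW hWT).rnDeriv_comp_aeEq hT
  obtain ⟨ε, hε0, hεt, hJ0⟩ : ∃ ε : ENNReal, ε ≠ 0 ∧ ε ≠ ⊤ ∧ l {x | ε ≤ w x} ≠ 0 := by
    by_contra! hcon
    have hall : ∀ n : ℕ, l {x | ((n : ENNReal) + 1)⁻¹ ≤ w x} = 0 := fun n =>
      hcon _ (by simp) (by simp)
    have hz : l {x | w x ≠ 0} = 0 := by
      refine measure_mono_null ?_ (measure_iUnion_null hall)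
      intro x hx
      obtain ⟨n, hn⟩ := ENNReal.exists_inv_nat_lt hx
      refine Set.mem_iUnion.2 ⟨n, ?_⟩
      refine le_trans ?_ hn.le
      exact ENNReal.inv_le_inv.2 le_self_add
    have hi : ∫⁻ x, w x ∂l = 0 := by
      rw [lintegral_eq_zero_iff hwm]
      exact hz
    rw [hw, Measure.lintegral_rnDeriv (rho_ac hfst W), rho_apply _ _ MeasurableSet.univ] at hi
    simp only [Set.preimage_univ, Set.univ_inter] at hi
    exact hW0 hi
  set J := {x | ε ≤ w x} with hJdef
  have hJ : MeasurableSet J := measurableSet_le measurable_const hwm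
  have hJT : T ⁻¹' J =ᵐ[l] J := by
    refine Filter.eventuallyEq_set.2 ?_
    filter_upwards [hwT] with x hx
    have h : w (T x) = w x := hx
    change ε ≤ w (T x) ↔ ε ≤ w x
    rw [h]
  -- approximation
  set B' : Set (α × α) := Prod.swap ⁻¹' B with hB'def
  have hB' : MeasurableSet B' := measurable_swap hB
  have hB'T : ∀ x y, (T x, T y) ∈ B' ↔ (x, y) ∈ B' := fun x y => hBT' y x
  set c : ENNReal := ε / 16 with hcdef
  have hc0 : c ≠ 0 := by simp [hcdef, hε0]
  have hct : c ≠ ⊤ := by finiteness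
  obtain ⟨η, hη0, hη⟩ : ∃ η : ENNReal, η ≠ 0 ∧ (η + η) / c < l J := by
    refine ⟨c * (l J / 2 / 2), by simp [hc0, hJ0], ?_⟩
    rw [← mul_add, ENNReal.add_halves, mul_comm, ENNReal.mul_div_cancel_right hc0 hct]
    exact ENNReal.half_lt_self hJ0 (measure_ne_top _ _)
  obtain ⟨f1, hf1, Q1, hQ1, hV1⟩ := approx (ν := ν) hB η hη0
  obtain ⟨f2, hf2, Q2, hQ2, hV2⟩ := approx (ν := ν) hB' η hη0
  set V1 := symmDiff B {p | p.2 ∈ Q1 (f1 p.1)} with hV1def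
  set V2 := symmDiff B' {p | p.2 ∈ Q2 (f2 p.1)} with hV2def
  have hEm : ∀ (f : α → ℕ) (Q : ℕ → Set α), Measurable f → (∀ i, MeasurableSet (Q i)) →
      MeasurableSet {p : α × α | p.2 ∈ Q (f p.1)} := by
    intro f Q hf hQ
    have : {p : α × α | p.2 ∈ Q (f p.1)} = ⋃ i, (f ⁻¹' {i}) ×ˢ Q i := by
      ext ⟨x, y⟩; simp
    rw [this]
    exact MeasurableSet.iUnion fun i => (hf (measurableSet_singleton i)).prod (hQ i)
  have hV1m : MeasurableSet V1 := hB.symmDiff (hEm f1 Q1 hf1 hQ1)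
  have hV2m : MeasurableSet V2 := hB'.symmDiff (hEm f2 Q2 hf2 hQ2)
  set V := V1 ∪ V2 with hVdef
  have hV : MeasurableSet V := hV1m.union hV2m
  set e := (rho ν V).rnDeriv l with he
  have hem : Measurable e := Measure.measurable_rnDeriv _ _
  have hbad : l {x | c ≤ e x} < l J := by
    refine lt_of_le_of_lt (meas_ge_le_lintegral_div hem.aemeasurable hc0 hct) (lt_of_le_of_lt ?_ hη)
    gcongr
    rw [he, Measure.lintegral_rnDeriv (rho_ac hfst V), rho_apply _ _ MeasurableSet.univ]
    refine le_trans (measure_mono Set.inter_subset_right) ?_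
    exact (measure_union_le _ _).trans (add_le_add hV1 hV2)
  have hG0 : l (J \ {x | c ≤ e x}) ≠ 0 := by
    intro h0
    have h3 : l J ≤ l (J \ {x | c ≤ e x}) + l {x | c ≤ e x} := by
      refine (measure_mono ?_).trans (measure_union_le _ _)
      intro x hx
      by_cases h : c ≤ e x
      · exact Or.inr h
      · exact Or.inl ⟨hx, h⟩
    rw [h0, zero_add] at h3
    exact absurd hbad (not_lt.2 h3)
  obtain ⟨i, j, hij⟩ : ∃ i j : ℕ, l ((J \ {x | c ≤ e x}) ∩ (f1 ⁻¹' {i} ∩ f2 ⁻¹' {j})) ≠ 0 := by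
    by_contra! h
    refine hG0 ?_
    refine measure_mono_null ?_ (measure_iUnion_null fun i => measure_iUnion_null fun j => h i j)
    intro x hx
    simp only [Set.mem_iUnion]
    exact ⟨f1 x, f2 x, hx, rfl, rfl⟩
  set A := (J \ {x | c ≤ e x}) ∩ (f1 ⁻¹' {i} ∩ f2 ⁻¹' {j}) with hAdef
  have hA : MeasurableSet A := (hJ.diff (measurableSet_le measurable_const hem)).inter
    ((hf1 (measurableSet_singleton i)).inter (hf2 (measurableSet_singleton j)))
  have hAc : ∀ A' ⊆ A, MeasurableSet A' → rho ν V A' ≤ c * l A' := by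
    intro A' hA' hm
    refine rho_le_of_density hfst fun x hx => ?_
    exact (not_le.1 (hA' hx).1.2).le
  obtain ⟨n, hn⟩ := exists_return hT hR htr hA hij
  obtain ⟨P, hPn⟩ := iterate_equiv T n
  have hP : MeasurePreserving P l l := by rw [hPn]; exact hT.iterate n
  have htrP : Triv l T P := by rw [hPn]; exact triv_iterate hT n
  have hP1 := mp_left hT hν hP htrP
  have hPT : ∀ x, P (T x) = T (P x) := by
    intro x
    rw [hPn, ← Function.iterate_succ_apply, Function.iterate_succ_apply']
  have hPB : Prod.map P P ⁻¹' B = B := by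
    ext ⟨x, y⟩
    rw [hPn]
    simp only [Set.mem_preimage, Prod.map_apply]
    clear hn hPn
    induction n generalizing x y with
    | zero => rfl
    | succ n ih => rw [Function.iterate_succ_apply, Function.iterate_succ_apply, ih, hBT']
  rw [← hPn] at hn
  set C := R ⁻¹' A ∩ P ⁻¹' A with hCdef
  have hC : MeasurableSet C := (R.measurable hA).inter (P.measurable hA)
  set D1 := symmDiff (Prod.map R id ⁻¹' B) (Prod.map P id ⁻¹' B) with hD1def
  set D2 := symmDiff (Prod.map R id ⁻¹' B') (Prod.map P id ⁻¹' B') with hD2def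
  have hD1m : MeasurableSet D1 := (hR1.measurable hB).symmDiff (hP1.measurable hB)
  have hD2m : MeasurableSet D2 := (hR1.measurable hB').symmDiff (hP1.measurable hB')
  set D := D1 ∪ D2 with hDdef
  have hD : MeasurableSet D := hD1m.union hD2m
  have hDT : Prod.map T T ⁻¹' D = D := by
    ext ⟨x, y⟩
    simp only [hDdef, hD1def, hD2def, Set.mem_preimage, Set.mem_symmDiff, Set.mem_union,
      Prod.map_apply, id, ← hc, hPT, hBT', hB'T]
  have hCD : ∀ C' ⊆ C, MeasurableSet C' → rho ν D C' ≤ (c + c) * l C' := by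
    intro C' hC' hm
    rw [rho_apply _ _ hm, add_mul]
    have hs : Prod.fst ⁻¹' C' ∩ D ⊆ (Prod.fst ⁻¹' C' ∩ Prod.map R id ⁻¹' V) ∪
        (Prod.fst ⁻¹' C' ∩ Prod.map P id ⁻¹' V) := by
      rintro ⟨x, y⟩ ⟨hx, h⟩
      have h1 := hC' hx
      have r1 : f1 (R x) = i := h1.1.2.1
      have r2 : f2 (R x) = j := h1.1.2.2
      have p1 : f1 (P x) = i := h1.2.2.1
      have p2 : f2 (P x) = j := h1.2.2.2
      simp only [hDdef, hD1def, hD2def, hVdef, hV1def, hV2def, Set.mem_preimage, Set.mem_symmDiff,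
        Set.mem_union, Set.mem_inter_iff, Set.mem_ofPred_eq,
        Prod.map_apply, id, r1, r2, p1, p2] at hx h ⊢
      exact prop_aux hx h
    refine le_trans (le_trans (measure_mono hs) (measure_union_le _ _)) (add_le_add ?_ ?_)
    · exact rho_comp hR hR1 hV hAc hm (hC'.trans Set.inter_subset_left)
    · exact rho_comp hP hP1 hV hAc hm (hC'.trans Set.inter_subset_right)
  have hnull := density_null hfst (by finiteness) hC hCD
  set d := (rho ν D).rnDeriv l with hd
  have hdm : Measurable d := Measure.measurable_rnDeriv _ _
  have hdT : d ∘ T =ᵐ[l] d := (rho_mp T.measurable hTT hD hDT).rnDeriv_comp_aeEq hT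
  set J' := J ∩ {x | d x ≤ c + c} with hJ'def
  have hKm : MeasurableSet {x | d x ≤ c + c} := measurableSet_le hdm measurable_const
  have hJ' : MeasurableSet J' := hJ.inter hKm
  have hJ'T : T ⁻¹' J' =ᵐ[l] J' := by
    refine hJT.inter ?_
    refine Filter.eventuallyEq_set.2 ?_
    filter_upwards [hdT] with x hx
    have h : d (T x) = d x := hx
    change d (T x) ≤ c + c ↔ d x ≤ c + c
    rw [h]
  have hJ'0 : l J' ≠ 0 := by
    intro h0
    refine hn ?_
    have hRJ := htr J hJ hJT
    have : l ((C ∩ {x | c + c < d x}) ∪ J' ∪ (R ⁻¹' J \ J)) = 0 :=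
      measure_union_null (measure_union_null hnull h0) (ae_le_set.1 hRJ.le)
    refine measure_mono_null ?_ this
    intro x hx
    have hxJ : R x ∈ J := hx.1.1.1
    by_cases h1 : x ∈ J
    · by_cases h2 : d x ≤ c + c
      · exact Or.inl (Or.inr ⟨h1, h2⟩)
      · exact Or.inl (Or.inl ⟨hx, not_le.1 h2⟩)
    · exact Or.inr ⟨hxJ, h1⟩
  have up := rho_W_le hT hR htr hP htrP hν hB hPB hJ' hJ'T
  have hDJ : rho ν D J' ≤ (c + c) * l J' := rho_le_of_density hfst fun x hx => hx.2
  have u1 : rho ν D1 J' ≤ rho ν D J' := by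
    rw [rho_apply _ _ hJ', rho_apply _ _ hJ']
    exact measure_mono (Set.inter_subset_inter_right _ Set.subset_union_left)
  have u2 : rho ν D2 J' ≤ rho ν D J' := by
    rw [rho_apply _ _ hJ', rho_apply _ _ hJ']
    exact measure_mono (Set.inter_subset_inter_right _ Set.subset_union_right)
  have lo : ε * l J' ≤ rho ν W J' := by
    rw [← Measure.setLIntegral_rnDeriv (rho_ac hfst W), ← setLIntegral_const]
    exact setLIntegral_mono hwm fun x hx => hx.1
  have fin : ε * l J' ≤ (c + c + (c + c)) * l J' := by
    rw [add_mul]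
    exact lo.trans (up.trans (add_le_add (u1.trans hDJ) (u2.trans hDJ)))
  rw [ENNReal.mul_le_mul_iff_left hJ'0 (measure_ne_top _ _)] at fin
  have hc4 : c + c + (c + c) = ε / 4 := by
    rw [hcdef]
    simp only [div_eq_mul_inv, ← mul_add]
    congr 1
    rw [← ENNReal.toReal_eq_toReal_iff' (by finiteness) (by finiteness)]
    rw [ENNReal.toReal_add (by finiteness) (by finiteness),
      ENNReal.toReal_add (by finiteness) (by finiteness)]
    simp
    norm_num
  rw [hc4] at fin
  refine absurd fin (not_le.2 ?_)
  refine ENNReal.div_lt_of_lt_mul' ?_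
  calc ε = 1 * ε := (one_mul _).symm
    _ < 4 * ε := by
      rw [ENNReal.mul_lt_mul_iff_left hε0 hεt]
      norm_num

end Aux

lemma relSq_unique {α : Type*} [MeasurableSpace α] {l : Measure α} [IsProbabilityMeasure l]
    {T S : α → α} (hT : MeasurePreserving T l l) (hS : MeasurePreserving S l l)
    (h1 : Triv l T S) (h2 : Triv l S T) {ν ν' : Measure (α × α)}
    (hν : RelSq l T ν) (hν' : RelSq l S ν') : ν = ν' := by
  have := relSq_prob hT hν
  have := relSq_prob hS hν'
  have e : aeInv l T = aeInv l S :=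
    le_antisymm (fun s hs => ⟨hs.1, h1 s hs.1 hs.2⟩) (fun s hs => ⟨hs.1, h2 s hs.1 hs.2⟩)
  refine ext_rect fun A B hA hB => ?_
  rw [rect hT hν hA hB, rect hS hν' hA hB, e]

lemma box_equiv {X : Type*} [MeasurableSpace X] (T : X ≃ᵐ X) (k : ℕ) :
    ∃ e : HKBox X k ≃ᵐ HKBox X k, (e : HKBox X k → HKBox X k) = HKBox.map T k := by
  induction k with
  | zero => exact ⟨T, rfl⟩
  | succ k ih =>
    obtain ⟨e, he⟩ := ih
    refine ⟨MeasurableEquiv.prodCongr e e, ?_⟩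
    show Prod.map e e = _
    rw [he]; rfl

lemma box_comm {X : Type*} {T S : X → X} (h : ∀ x, T (S x) = S (T x)) (k : ℕ) :
    ∀ x, HKBox.map T k (HKBox.map S k x) = HKBox.map S k (HKBox.map T k x) := by
  induction k with
  | zero => exact h
  | succ k ih => exact fun p => Prod.ext (ih p.1) (ih p.2)

lemma box_main {X : Type*} [MeasurableSpace X] {μ : Measure X} [IsProbabilityMeasure μ]
    (T S : X ≃ᵐ X) (hc : ∀ x, T (S x) = S (T x)) (hT : Ergodic T μ)
    (hS : MeasurePreserving S μ μ) {ν : ∀ k, Measure (HKBox X k)} (hν : IsHKSeq μ T ν) (k : ℕ) :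
    IsProbabilityMeasure (ν k) ∧ MeasurePreserving (HKBox.map T k) (ν k) (ν k) ∧
    MeasurePreserving (HKBox.map S k) (ν k) (ν k) ∧
    Triv (ν k) (HKBox.map T k) (HKBox.map S k) := by
  induction k with
  | zero =>
    rw [hν.1]
    refine ⟨‹_›, hT.toMeasurePreserving, hS, ?_⟩
    intro s hs hsT
    change S ⁻¹' s =ᵐ[μ] s
    rcases hT.quasiErgodic.ae_empty_or_univ₀ hs.nullMeasurableSet hsT with h | h
    · exact (hS.quasiMeasurePreserving.preimage_ae_eq h).trans h.symm
    · exact (hS.quasiMeasurePreserving.preimage_ae_eq h).trans h.symm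
  | succ k ih =>
    obtain ⟨hp, h1, h2, h3⟩ := ih
    obtain ⟨eT, heT⟩ := box_equiv T k
    obtain ⟨eS, heS⟩ := box_equiv S k
    have hcomm := box_comm hc k
    have hsq : RelSq (ν k) (HKBox.map T k) (ν (k + 1)) := hν.2 k
    have hpr := relSq_prob h1 hsq
    rw [← heT] at h1 h3 hsq hcomm
    rw [← heS] at h2 h3 hcomm
    have := step h1 h2 hcomm h3 hsq
    rw [heT, heS] at this
    exact ⟨hpr, this⟩

lemma box_eq {X : Type*} [MeasurableSpace X] {μ : Measure X} [IsProbabilityMeasure μ]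
    (T S : X ≃ᵐ X) (hc : ∀ x, T (S x) = S (T x)) (hT : Ergodic T μ) (hS : Ergodic S μ)
    {νT νS : ∀ k, Measure (HKBox X k)} (hνT : IsHKSeq μ T νT) (hνS : IsHKSeq μ S νS) (k : ℕ) :
    νT k = νS k := by
  induction k with
  | zero => rw [hνT.1, hνS.1]
  | succ k ih =>
    obtain ⟨hp, a1, a2, a3⟩ := box_main T S hc hT hS.toMeasurePreserving hνT k
    obtain ⟨-, -, -, b3⟩ := box_main S T (fun x => (hc x).symm) hS hT.toMeasurePreserving hνS k
    have r1 : RelSq (νT k) (HKBox.map T k) (νT (k + 1)) := hνT.2 k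
    have r2 : RelSq (νS k) (HKBox.map S k) (νS (k + 1)) := hνS.2 k
    rw [← ih] at b3 r2
    exact relSq_unique a1 a2 a3 b3 r1 r2

/-- For commuting invertible ergodic measure preserving transformations `T` and `S` of a
probability space, the Host–Kra seminorms agree: `⦀f⦀_{k,T} = ⦀f⦀_{k,S}` for all `k ≥ 1`
and all `f ∈ L^∞(μ)`. -/
theorem seminorms_eq_of_commuting {X : Type*} [MeasurableSpace X]
    (μ : Measure X) [IsProbabilityMeasure μ]
    (T S T' S' : X → X) (hT' : Measurable T') (hS' : Measurable S')
    (hTinv : Function.LeftInverse T' T ∧ Function.RightInverse T' T)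
    (hSinv : Function.LeftInverse S' S ∧ Function.RightInverse S' S)
    (hcomm : T ∘ S = S ∘ T)
    (hergT : Ergodic T μ) (hergS : Ergodic S μ)
    (νT νS : ∀ k, Measure (HKBox X k))
    (hνT : IsHKSeq μ T νT) (hνS : IsHKSeq μ S νS) :
    ∀ k, 1 ≤ k → ∀ f : X → ℝ, Measurable f → (∃ C, ∀ x, |f x| ≤ C) →
      HKseminorm νT k f = HKseminorm νS k f := by
  intro k _ f _ _
  let eT : X ≃ᵐ X := ⟨⟨T, T', hTinv.1, hTinv.2⟩, hergT.measurable, hT'⟩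
  let eS : X ≃ᵐ X := ⟨⟨S, S', hSinv.1, hSinv.2⟩, hergS.measurable, hS'⟩
  have h := box_eq eT eS (fun x => congrFun hcomm x) hergT hergS hνT hνS k
  unfold HKseminorm
  rw [h]
end
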